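/- Fix m ∈ ℕ. Let (F_n) be a sequence of random variables in the finitely generated Wiener chaos of degree m, i.e. F_n = P_n(N^{(n)}) where N^{(n)} ~ γ_{K_n} for some K_n ∈ ℕ and P_n lies in the linear span of the products ∏_{i=1}^{K_n} H_{k_i}(x_i) with Σ_i k_i = m. If the laws of F_n converge weakly to the standard Gaussian distribution N(0,1), then for every q ∈ ℕ one has limsup_{n→∞} E[Γ[F_n,F_n]^{−q}] < ∞, i.e. limsup_{n→∞} ∫_{ℝ^{K_n}} ( Σ_{i=1}^{K_n} (∂_i P_n(x))² )^{−q} dγ_{K_n}(x) < ∞. -/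

import Mathlib

open MeasureTheory ProbabilityTheory MvPolynomial Filter Topology

noncomputable def gaussPi (ι : Type) [Fintype ι] : Measure (ι → ℝ) :=
  Measure.pi fun _ => gaussianReal 0 1

noncomputable def hermiteProd {K : ℕ} (k : Fin K → ℕ) : MvPolynomial (Fin K) ℝ :=
  ∏ i, Polynomial.aeval (MvPolynomial.X i) (Polynomial.hermite (k i))

noncomputable def chaos (K m : ℕ) : Submodule ℝ (MvPolynomial (Fin K) ℝ) :=
  Submodule.span ℝ {P | ∃ k : Fin K → ℕ, ∑ i, k i = m ∧ P = hermiteProd k}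

noncomputable def sqField {ι : Type} [Fintype ι] (P : MvPolynomial ι ℝ) (x : ι → ℝ) : ℝ :=
  ∑ i, (eval x (pderiv i P)) ^ 2

def TendstoInLaw {E : Type} [MeasurableSpace E] [TopologicalSpace E]
    (μs : ℕ → Measure E) (μ : Measure E) : Prop :=
  ∀ f : BoundedContinuousFunction E ℝ,
    Tendsto (fun n => ∫ x, f x ∂μs n) atTop (𝓝 (∫ x, f x ∂μ))

/-!
Induction on the degree of the chaos shows that if `F` is an eigenvector of the Ornstein-Uhlenbeck
operator and `Γ[F, F]` is close in `L²` to a constant `c > 0`, then the negative moments of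
`Γ[F, F]` are bounded, uniformly in the dimension. Differentiating `F` in independent standard
Gaussian directions `N₁, …, N_p` lowers the degree by one, and the matrix `Γ[∂_{N_i} F, ∂_{N_j} F]`
is then close to a multiple of the identity with large probability. By induction every combination
`G = ∑ u_j ∂_{N_j} F` with `|u| = 1` has bounded negative moments of `Γ[G, G]`, so repeated
integration by parts makes the characteristic function of `G` decay polynomially, which bounds the
Laplace transform of `∑ (∂_{N_j} F)²`. As `(∂_N F)²` has mean `Γ[F, F]` over the directions `N`,
Jensen's inequality turns this into a decay of the Laplace transform of `Γ[F, F]`, that is, into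
bounded negative moments.

Hypercontractivity upgrades convergence in law to convergence of the second and fourth moments,
and these control the `L²` distance of `Γ[F_n, F_n]` from `m`.
-/

section GaussianIntegration

lemma hasDerivAt_gaussianPDFReal (μ : ℝ) (v : NNReal) (x : ℝ) :
    HasDerivAt (gaussianPDFReal μ v) (-((x - μ) / v * gaussianPDFReal μ v x)) x := by
  have exponent : HasDerivAt (fun y : ℝ => -(y - μ) ^ 2 / (2 * (v : ℝ))) (-((x - μ) / v)) x := by
    convert! (((hasDerivAt_id x).sub_const μ).pow 2).neg.div_const (2 * (v : ℝ)) using 1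
    simp only [id]
    ring
  rw [gaussianPDFReal_def]
  convert! exponent.exp.const_mul (√(2 * Real.pi * v))⁻¹ using 1
  ring

lemma integrable_pow_gaussianReal {μ : ℝ} {v : NNReal} (n : ℕ) :
    Integrable (fun x => x ^ n) (gaussianReal μ v) :=
  integrable_pow_of_integrable_exp_mul one_ne_zero
    (integrable_exp_mul_gaussianReal 1) (integrable_exp_mul_gaussianReal (-1)) n

lemma integrable_gaussianReal_iff {E : Type*} [NormedAddCommGroup E] [NormedSpace ℝ E]
    {μ : ℝ} {v : NNReal} (hv : v ≠ 0) {f : ℝ → E} :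
    Integrable f (gaussianReal μ v) ↔ Integrable fun x => gaussianPDFReal μ v x • f x := by
  rw [gaussianReal_of_var_ne_zero _ hv, integrable_withDensity_iff_integrable_smul'
    (measurable_gaussianPDF _ _) (ae_of_all _ fun _ => gaussianPDF_lt_top)]
  simp only [toReal_gaussianPDF]

lemma integral_sub_smul_gaussianReal {E : Type*} [NormedAddCommGroup E] [NormedSpace ℝ E]
    {μ : ℝ} {v : NNReal} {f f' : ℝ → E} (hd : ∀ x, HasDerivAt f (f' x) x)
    (hf : Integrable f (gaussianReal μ v)) (hf' : Integrable f' (gaussianReal μ v))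
    (hxf : Integrable (fun x => (x - μ) • f x) (gaussianReal μ v)) :
    ∫ x, (x - μ) • f x ∂gaussianReal μ v = (v : ℝ) • ∫ x, f' x ∂gaussianReal μ v := by
  rcases eq_or_ne v 0 with rfl | hv
  · rw [gaussianReal_zero_var, NNReal.coe_zero, zero_smul]
    exact integral_eq_zero_of_ae (by simp [Filter.EventuallyEq, ae_dirac_eq])
  have hv' : (v : ℝ) ≠ 0 := NNReal.coe_ne_zero.mpr hv
  have hxf' := (integrable_gaussianReal_iff hv).mp hxf
  have hvf' : Integrable fun x => (v : ℝ) • gaussianPDFReal μ v x • f' x :=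
    ((integrable_gaussianReal_iff hv).mp hf').smul (v : ℝ)
  have total_derivative := integral_eq_zero_of_hasDerivAt_of_integrable
    (f := fun x => (v : ℝ) • gaussianPDFReal μ v x • f x)
    (f' := fun x => (v : ℝ) • gaussianPDFReal μ v x • f' x -
      gaussianPDFReal μ v x • (x - μ) • f x)
    (fun x => by
      convert! ((hasDerivAt_gaussianPDFReal μ v x).smul (hd x)).const_smul (v : ℝ) using 1
      rw [smul_add, sub_eq_add_neg, smul_smul _ (x - μ), smul_smul (v : ℝ) (-_), ← neg_smul]
      congr 2
      field_simp)
    (hvf'.sub hxf') (((integrable_gaussianReal_iff hv).mp hf).smul (v : ℝ))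
  rw [integral_sub hvf' hxf', integral_smul] at total_derivative
  rw [integral_gaussianReal_eq_integral_smul hv, integral_gaussianReal_eq_integral_smul hv]
  exact (sub_eq_zero.mp total_derivative).symm

lemma measurePreserving_update {ι : Type*} [Fintype ι] [DecidableEq ι] {α : ι → Type*}
    [∀ i, MeasurableSpace (α i)] (μ : ∀ i, Measure (α i)) [∀ i, IsProbabilityMeasure (μ i)]
    (i : ι) :
    MeasurePreserving (fun z : (∀ j, α j) × α i => Function.update z.1 i z.2)
      ((Measure.pi μ).prod (μ i)) (Measure.pi μ) := by
  have hm : Measurable fun z : (∀ j, α j) × α i => Function.update z.1 i z.2 :=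
    measurable_update'
  refine ⟨hm, (Measure.pi_eq fun s hs => ?_).symm⟩
  have preimage_box : (fun z : (∀ j, α j) × α i => Function.update z.1 i z.2) ⁻¹' Set.univ.pi s =
      Set.univ.pi (Function.update s i Set.univ) ×ˢ s i := by
    ext ⟨x, t⟩
    simp only [Set.mem_preimage, Set.mem_pi, Set.mem_univ, true_implies, Set.mem_prod]
    rw [Function.forall_update_iff x (p := fun j y => y ∈ s j),
      Function.forall_update_iff s (p := fun j u => x j ∈ u)]
    simp [and_comm]
  rw [Measure.map_apply hm (MeasurableSet.univ_pi hs), preimage_box, Measure.prod_prod,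
    Measure.pi_pi, ← Finset.mul_prod_erase _ _ (Finset.mem_univ i),
    ← Finset.mul_prod_erase Finset.univ (fun j => μ j (s j)) (Finset.mem_univ i),
    Function.update_self, measure_univ, one_mul, mul_comm]
  congr 1
  exact Finset.prod_congr rfl fun j hj => by rw [Function.update_of_ne (Finset.ne_of_mem_erase hj)]

lemma integral_pi_eq_integral_update {ι : Type*} [Fintype ι] [DecidableEq ι] {α : ι → Type*}
    [∀ i, MeasurableSpace (α i)] (μ : ∀ i, Measure (α i)) [∀ i, IsProbabilityMeasure (μ i)]
    {E : Type*} [NormedAddCommGroup E] [NormedSpace ℝ E] (i : ι) {f : (∀ j, α j) → E}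
    (hf : Integrable f (Measure.pi μ)) :
    ∫ x, f x ∂Measure.pi μ = ∫ x, ∫ s, f (Function.update x i s) ∂μ i ∂Measure.pi μ := by
  have mp := measurePreserving_update μ i
  rw [← integral_prod (fun z => f (Function.update z.1 i z.2))
    (mp.integrable_comp_of_integrable hf)]
  conv_lhs => rw [← mp.map_eq]
  exact integral_map mp.measurable.aemeasurable (by rw [mp.map_eq]; exact hf.aestronglyMeasurable)

lemma hasDerivAt_eval_update {σ : Type*} [DecidableEq σ]
    (P : MvPolynomial σ ℝ) (x : σ → ℝ) (i : σ) (s : ℝ) :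
    HasDerivAt (fun s => eval (Function.update x i s) P)
      (eval (Function.update x i s) (pderiv i P)) s := by
  induction P using MvPolynomial.induction_on with
  | C a => simpa using hasDerivAt_const s a
  | add p q hp hq => simp only [map_add]; exact hp.add hq
  | mul_X p j hp =>
    have hX : HasDerivAt (fun s => Function.update x i s j)
        (eval (Function.update x i s) (pderiv i (X j : MvPolynomial σ ℝ))) s := by
      rcases eq_or_ne j i with rfl | h
      · simpa using hasDerivAt_id' s
      · simpa [pderiv_X_of_ne h, Function.update_of_ne h] using hasDerivAt_const s (x j)
    simp only [map_mul, eval_X, pderiv_mul, map_add]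
    exact hp.mul hX

variable {ι : Type} [Fintype ι]

instance : IsProbabilityMeasure (gaussPi ι) := by unfold gaussPi; infer_instance

lemma integral_coord_smul_gaussPi [DecidableEq ι] {E : Type*} [NormedAddCommGroup E]
    [NormedSpace ℝ E] (i : ι) {f f' : (ι → ℝ) → E}
    (hd : ∀ x s, HasDerivAt (fun s => f (Function.update x i s)) (f' (Function.update x i s)) s)
    (hf : Integrable f (gaussPi ι)) (hf' : Integrable f' (gaussPi ι))
    (hxf : Integrable (fun x => x i • f x) (gaussPi ι)) :
    ∫ x, x i • f x ∂gaussPi ι = ∫ x, f' x ∂gaussPi ι := by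
  have slice : ∀ {g : (ι → ℝ) → E}, Integrable g (gaussPi ι) → ∀ᵐ x ∂gaussPi ι,
      Integrable (fun s => g (Function.update x i s)) (gaussianReal 0 1) := fun hg =>
    ((measurePreserving_update _ i).integrable_comp_of_integrable hg).prod_right_ae
  unfold gaussPi at *
  rw [integral_pi_eq_integral_update _ i hf', integral_pi_eq_integral_update _ i hxf]
  refine integral_congr_ae ?_
  filter_upwards [slice hf, slice hf', slice hxf] with x h h' hx
  simp only [Function.update_self] at hx ⊢
  simpa using integral_sub_smul_gaussianReal (hd x) h h' (by simpa using hx)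

lemma integrable_eval_gaussPi (P : MvPolynomial ι ℝ) :
    Integrable (fun x => eval x P) (gaussPi ι) := by
  induction P using MvPolynomial.induction_on' with
  | monomial s a =>
    simp only [eval_monomial, Finsupp.prod_fintype _ _ fun _ => pow_zero _]
    refine (Integrable.fintype_prod (f := fun i t => t ^ s i) fun i => ?_).const_mul a
    exact integrable_pow_gaussianReal (s i)
  | add p q hp hq => simp only [map_add]; exact hp.add hq

end GaussianIntegration

section GaussianExpectation

lemma le_of_sq_le_mul_self {R : Type*} [Semiring R] [LinearOrder R] [IsStrictOrderedRing R]
    {a b : R} (hb : 0 ≤ b) (h : a ^ 2 ≤ b * a) : a ≤ b := by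
  by_contra! hlt
  exact (sq a ▸ h).not_gt (mul_lt_mul_of_pos_right hlt (hb.trans_lt hlt))

variable {ι : Type} [Fintype ι]

/-- Expectation of a polynomial under the standard Gaussian measure, as a linear functional;
written `𝐄`. -/
noncomputable def gaussExp : MvPolynomial ι ℝ →ₗ[ℝ] ℝ where
  toFun P := ∫ x, eval x P ∂gaussPi ι
  map_add' P Q := by
    simp only [map_add]
    exact integral_add (integrable_eval_gaussPi P) (integrable_eval_gaussPi Q)
  map_smul' a P := by
    simp only [smul_eval, RingHom.id_apply, smul_eq_mul]
    exact integral_const_mul a _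

local notation "𝐄" => gaussExp

lemma gaussExp_apply (P : MvPolynomial ι ℝ) : 𝐄 P = ∫ x, eval x P ∂gaussPi ι := rfl

@[simp]
lemma gaussExp_C (a : ℝ) : 𝐄 (C a : MvPolynomial ι ℝ) = a := by simp [gaussExp_apply]

@[simp]
lemma gaussExp_C_mul (a : ℝ) (P : MvPolynomial ι ℝ) : 𝐄 (C a * P) = a * 𝐄 P := by
  rw [← smul_eq_C_mul, map_smul, smul_eq_mul]

lemma gaussExp_nonneg {P : MvPolynomial ι ℝ} (h : ∀ x, 0 ≤ eval x P) : 0 ≤ 𝐄 P :=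
  integral_nonneg h

lemma gaussExp_sq_nonneg (P : MvPolynomial ι ℝ) : 0 ≤ 𝐄 (P ^ 2) :=
  gaussExp_nonneg fun x => by rw [map_pow]; exact sq_nonneg _

lemma gaussExp_mono {P Q : MvPolynomial ι ℝ} (h : ∀ x, eval x P ≤ eval x Q) : 𝐄 P ≤ 𝐄 Q :=
  integral_mono (integrable_eval_gaussPi P) (integrable_eval_gaussPi Q) h

lemma gaussExp_mul_sq_le (P Q : MvPolynomial ι ℝ) : 𝐄 (P * Q) ^ 2 ≤ 𝐄 (P ^ 2) * 𝐄 (Q ^ 2) := by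
  simpa [sq] using LinearMap.BilinForm.apply_sq_le_of_symm
    ((LinearMap.mul ℝ (MvPolynomial ι ℝ)).compr₂ gaussExp)
    (fun P => by simpa [sq] using gaussExp_sq_nonneg P)
    ⟨fun P Q => by simp [mul_comm P Q]⟩ P Q

lemma gaussExp_X_mul (i : ι) (P : MvPolynomial ι ℝ) : 𝐄 (X i * P) = 𝐄 (pderiv i P) := by
  classical
  have hXP := integrable_eval_gaussPi (X i * P)
  simp only [gaussExp_apply, map_mul, eval_X] at hXP ⊢
  exact integral_coord_smul_gaussPi i (fun x s => hasDerivAt_eval_update P x i s)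
    (integrable_eval_gaussPi P) (integrable_eval_gaussPi _) hXP

end GaussianExpectation

local notation "𝐄" => gaussExp

section OrnsteinUhlenbeck

lemma pderiv_pderiv_comm {σ R : Type*} [CommRing R] (i j : σ) (P : MvPolynomial σ R) :
    pderiv i (pderiv j P) = pderiv j (pderiv i P) := by
  classical
  have commutator : ⁅(pderiv i : Derivation R (MvPolynomial σ R) (MvPolynomial σ R)),
      pderiv j⁆ = 0 :=
    MvPolynomial.derivation_ext fun k => by
      rw [Derivation.commutator_apply, pderiv_X, pderiv_X, Pi.single_apply, Pi.single_apply]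
      split_ifs <;> simp
  have := Derivation.congr_fun commutator P
  rwa [Derivation.commutator_apply, Derivation.zero_apply, sub_eq_zero] at this

lemma totalDegree_pderiv_le {σ R : Type*} [CommSemiring R] (i : σ) (P : MvPolynomial σ R) :
    (pderiv i P).totalDegree ≤ P.totalDegree - 1 := by
  conv_lhs => rw [P.as_sum, map_sum]
  refine totalDegree_finsetSum_le fun s hs => ?_
  rw [pderiv_monomial]
  rcases eq_or_ne (s i) 0 with h0 | h0
  · simp [h0]
  refine (totalDegree_monomial_le _ _).trans ?_
  have single_le : Finsupp.single i 1 ≤ s := by simpa using Nat.one_le_iff_ne_zero.mpr h0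
  have degree_eq : (s - Finsupp.single i 1).degree + 1 = s.degree := by
    conv_rhs => rw [← tsub_add_cancel_of_le single_le, map_add, Finsupp.degree_single]
  have : s.degree ≤ P.totalDegree := le_totalDegree hs
  change (s - Finsupp.single i 1).degree ≤ _
  lia

variable {ι : Type} [Fintype ι]

lemma sum_smul_pderiv_apply {R : Type*} [CommSemiring R] {σ : Type*} [Fintype σ]
    (c : σ → MvPolynomial σ R) (P : MvPolynomial σ R) :
    (∑ i, c i • pderiv i : Derivation R (MvPolynomial σ R) (MvPolynomial σ R)) P =
      ∑ i, c i * pderiv i P := by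
  rw [← Derivation.coeFnAddMonoidHom_apply, map_sum, Finset.sum_apply]
  rfl

/-- The carré du champ `Γ[P, Q] = ∑ i, ∂ᵢP ∂ᵢQ`, bundled as a derivation in `Q`. -/
noncomputable def carreDuChamp (P : MvPolynomial ι ℝ) :
    Derivation ℝ (MvPolynomial ι ℝ) (MvPolynomial ι ℝ) :=
  ∑ i, pderiv i P • pderiv i

local notation "Γ[" P "," Q "]" => carreDuChamp P Q

lemma carreDuChamp_apply (P Q : MvPolynomial ι ℝ) : Γ[P, Q] = ∑ i, pderiv i P * pderiv i Q :=
  sum_smul_pderiv_apply _ _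

lemma carreDuChamp_comm (P Q : MvPolynomial ι ℝ) : Γ[P, Q] = Γ[Q, P] := by
  simp only [carreDuChamp_apply, mul_comm]

lemma carreDuChamp_mul (P Q R : MvPolynomial ι ℝ) : Γ[P, Q * R] = Q * Γ[P, R] + R * Γ[P, Q] :=
  (carreDuChamp P).leibniz Q R

lemma eval_carreDuChamp_self (P : MvPolynomial ι ℝ) (x : ι → ℝ) :
    eval x Γ[P, P] = sqField P x := by
  simp only [carreDuChamp_apply, sqField, map_sum, map_mul, sq]

lemma sqField_nonneg (P : MvPolynomial ι ℝ) (x : ι → ℝ) : 0 ≤ sqField P x :=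
  Finset.sum_nonneg fun _ _ => sq_nonneg _

lemma gaussExp_carreDuChamp_self_nonneg (P : MvPolynomial ι ℝ) : 0 ≤ 𝐄 Γ[P, P] :=
  gaussExp_nonneg fun x => by rw [eval_carreDuChamp_self]; exact sqField_nonneg P x

/-- The Ornstein–Uhlenbeck operator `L P = ∑ i, (∂ᵢ∂ᵢP - xᵢ ∂ᵢP)` on polynomials. -/
noncomputable def ouOp : MvPolynomial ι ℝ →ₗ[ℝ] MvPolynomial ι ℝ :=
  ∑ i, ((pderiv i).toLinearMap ∘ₗ (pderiv i).toLinearMap -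
    LinearMap.mulLeft ℝ (X i) ∘ₗ (pderiv i).toLinearMap)

lemma ouOp_apply (P : MvPolynomial ι ℝ) :
    ouOp P = ∑ i, (pderiv i (pderiv i P) - X i * pderiv i P) := by
  simp [ouOp]

@[simp]
lemma ouOp_C_mul (a : ℝ) (P : MvPolynomial ι ℝ) : ouOp (C a * P) = C a * ouOp P := by
  rw [← smul_eq_C_mul, map_smul, smul_eq_C_mul]

lemma ouOp_mul (P Q : MvPolynomial ι ℝ) :
    ouOp (P * Q) = P * ouOp Q + Q * ouOp P + 2 * Γ[P, Q] := by
  simp only [ouOp_apply, carreDuChamp_apply, Derivation.leibniz, smul_eq_mul, Finset.mul_sum,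
    ← Finset.sum_add_distrib, map_add]
  exact Finset.sum_congr rfl fun i _ => by ring

lemma gaussExp_carreDuChamp (P Q : MvPolynomial ι ℝ) : 𝐄 Γ[P, Q] = -𝐄 (P * ouOp Q) := by
  have divergence : Γ[P, Q] + P * ouOp Q =
      ∑ i, (pderiv i (P * pderiv i Q) - X i * (P * pderiv i Q)) := by
    simp only [ouOp_apply, carreDuChamp_apply, Derivation.leibniz, smul_eq_mul, Finset.mul_sum,
      ← Finset.sum_add_distrib]
    exact Finset.sum_congr rfl fun i _ => by ring
  rw [eq_neg_iff_add_eq_zero, ← map_add, divergence, map_sum]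
  exact Finset.sum_eq_zero fun i _ => by rw [map_sub, gaussExp_X_mul, sub_self]

lemma gaussExp_ouOp (P : MvPolynomial ι ℝ) : 𝐄 (ouOp P) = 0 := by
  simpa [carreDuChamp_comm 1] using (gaussExp_carreDuChamp 1 P).symm

lemma pderiv_ouOp (j : ι) (P : MvPolynomial ι ℝ) :
    pderiv j (ouOp P) = ouOp (pderiv j P) - pderiv j P := by
  classical
  simp only [ouOp_apply, map_sum, map_sub, Derivation.leibniz, smul_eq_mul, pderiv_X,
    Pi.single_apply, mul_ite, mul_one, mul_zero, pderiv_pderiv_comm j, ← sub_sub,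
    Finset.sum_sub_distrib, Finset.sum_add_distrib]
  simp

lemma gaussExp_ouOp_sq (P : MvPolynomial ι ℝ) :
    𝐄 (ouOp P ^ 2) = 𝐄 Γ[P, P] + ∑ j, 𝐄 Γ[pderiv j P, pderiv j P] := by
  have commute : Γ[ouOp P, P] = ∑ j, pderiv j P * ouOp (pderiv j P) - Γ[P, P] := by
    simp only [carreDuChamp_apply, pderiv_ouOp, ← Finset.sum_sub_distrib]
    exact Finset.sum_congr rfl fun i _ => by ring
  have ibp : 𝐄 (ouOp P ^ 2) = -𝐄 Γ[ouOp P, P] := by rw [gaussExp_carreDuChamp, neg_neg, sq]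
  simp only [ibp, commute, gaussExp_carreDuChamp (pderiv _ P), map_sub, map_sum,
    Finset.sum_neg_distrib]
  ring

lemma gaussExp_carreDuChamp_self_le_ouOp_sq (P : MvPolynomial ι ℝ) :
    𝐄 Γ[P, P] ≤ 𝐄 (ouOp P ^ 2) := by
  rw [gaussExp_ouOp_sq]
  exact le_add_of_nonneg_right
    (Finset.sum_nonneg fun j _ => gaussExp_carreDuChamp_self_nonneg _)

lemma gaussExp_ouOp_sq_le_of_pderiv {D : ℝ} {P : MvPolynomial ι ℝ}
    (h : ∀ i, 𝐄 Γ[pderiv i P, pderiv i P] ≤ D * 𝐄 (pderiv i P ^ 2)) :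
    𝐄 (ouOp P ^ 2) ≤ (D + 1) * 𝐄 Γ[P, P] := by
  have expand : 𝐄 Γ[P, P] = ∑ j, 𝐄 (pderiv j P ^ 2) := by
    simp only [carreDuChamp_apply, map_sum, sq]
  calc 𝐄 (ouOp P ^ 2) ≤ 𝐄 Γ[P, P] + ∑ j, D * 𝐄 (pderiv j P ^ 2) := by
        rw [gaussExp_ouOp_sq]
        gcongr
        exact h _
    _ = (D + 1) * 𝐄 Γ[P, P] := by rw [← Finset.mul_sum, ← expand]; ring

lemma gaussExp_carreDuChamp_self_le {D : ℕ} {P : MvPolynomial ι ℝ} (hP : P.totalDegree ≤ D) :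
    𝐄 Γ[P, P] ≤ D * 𝐄 (P ^ 2) := by
  induction D generalizing P with
  | zero =>
    rw [totalDegree_eq_zero_iff_eq_C.mp (Nat.le_zero.mp hP)]
    simp
  | succ D ih =>
    have spectral : 𝐄 (ouOp P ^ 2) ≤ (D + 1) * 𝐄 Γ[P, P] :=
      gaussExp_ouOp_sq_le_of_pderiv fun i =>
        ih ((totalDegree_pderiv_le i P).trans (Nat.sub_le_of_le_add hP))
    have hP2 := gaussExp_sq_nonneg P
    refine le_of_sq_le_mul_self (by positivity) ?_
    calc 𝐄 Γ[P, P] ^ 2 ≤ 𝐄 (P ^ 2) * 𝐄 (ouOp P ^ 2) := by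
          rw [gaussExp_carreDuChamp, neg_sq]
          exact gaussExp_mul_sq_le P (ouOp P)
      _ ≤ 𝐄 (P ^ 2) * ((D + 1) * 𝐄 Γ[P, P]) := by gcongr
      _ = (D + 1 : ℕ) * 𝐄 (P ^ 2) * 𝐄 Γ[P, P] := by push_cast; ring

lemma gaussExp_ouOp_sq_le {D : ℕ} {P : MvPolynomial ι ℝ} (hP : P.totalDegree ≤ D) :
    𝐄 (ouOp P ^ 2) ≤ D * 𝐄 Γ[P, P] := by
  cases D with
  | zero =>
    rw [totalDegree_eq_zero_iff_eq_C.mp (Nat.le_zero.mp hP)]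
    simp [ouOp_apply]
  | succ D =>
    rw [Nat.cast_succ]
    exact gaussExp_ouOp_sq_le_of_pderiv fun i => gaussExp_carreDuChamp_self_le
      ((totalDegree_pderiv_le i P).trans (Nat.sub_le_of_le_add hP))

lemma degree_smul_monomial_eq (s : ι →₀ ℕ) (a : ℝ) :
    (s.degree : ℝ) • monomial s a =
      ∑ i, pderiv i (pderiv i (monomial s a)) - ouOp (monomial s a) := by
  have euler := (isHomogeneous_monomial (R := ℝ) (d := s) a rfl).sum_X_mul_pderiv
  rw [ouOp_apply, Finset.sum_sub_distrib, euler, sub_sub_cancel, Nat.cast_smul_eq_nsmul]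

lemma exists_eq_C_add_ouOp (P : MvPolynomial ι ℝ) :
    ∃ (a : ℝ) (Q : MvPolynomial ι ℝ), P = C a + ouOp Q := by
  suffices h : P ∈ ℝ ∙ (1 : MvPolynomial ι ℝ) ⊔ LinearMap.range (ouOp (ι := ι)) by
    obtain ⟨_, h₁, _, ⟨Q, rfl⟩, rfl⟩ := Submodule.mem_sup.mp h
    obtain ⟨a, rfl⟩ := Submodule.mem_span_singleton.mp h₁
    exact ⟨a, Q, by rw [smul_eq_C_mul, mul_one]⟩
  induction hn : P.totalDegree using Nat.strong_induction_on generalizing P with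
  | _ n ih =>
  rw [P.as_sum]
  refine Submodule.sum_mem _ fun s hs => ?_
  rcases eq_or_ne s 0 with rfl | hs0
  · refine Submodule.mem_sup_left (Submodule.mem_span_singleton.mpr ⟨coeff 0 P, ?_⟩)
    rw [smul_eq_C_mul, mul_one]
    rfl
  have hdeg : (s.degree : ℝ) ≠ 0 :=
    Nat.cast_ne_zero.mpr ((Finsupp.degree_eq_zero_iff s).not.mpr hs0)
  rw [← Submodule.smul_mem_iff _ hdeg, degree_smul_monomial_eq]
  refine Submodule.sub_mem _ (Submodule.sum_mem _ fun i _ => ?_) (Submodule.mem_sup_right ⟨_, rfl⟩)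
  refine ih _ ?_ _ rfl
  have hmon : (monomial s (coeff s P)).totalDegree ≤ n :=
    (totalDegree_monomial_le _ _).trans (hn ▸ le_totalDegree hs)
  have hn0 : s.degree ≤ n := hn ▸ le_totalDegree hs
  have := totalDegree_pderiv_le i (monomial s (coeff s P))
  have := totalDegree_pderiv_le i (pderiv i (monomial s (coeff s P)))
  have : s.degree ≠ 0 := by exact_mod_cast hdeg
  lia

lemma gaussian_poincare (P : MvPolynomial ι ℝ) : 𝐄 (P ^ 2) ≤ 𝐄 P ^ 2 + 𝐄 Γ[P, P] := by
  obtain ⟨a, Q, hP⟩ := exists_eq_C_add_ouOp P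
  have hmean : 𝐄 P = a := by rw [hP, map_add, gaussExp_C, gaussExp_ouOp, add_zero]
  have hsq : 𝐄 (P ^ 2) = a ^ 2 + 𝐄 (ouOp Q ^ 2) := by
    have : P ^ 2 = C (a ^ 2) + C (2 * a) * ouOp Q + ouOp Q ^ 2 := by
      rw [hP]; simp only [map_mul, map_pow, map_ofNat]; ring
    rw [this, map_add, map_add, gaussExp_C, gaussExp_C_mul, gaussExp_ouOp]; ring
  have hcross : 𝐄 Γ[P, Q] = -𝐄 (ouOp Q ^ 2) := by
    have : P * ouOp Q = C a * ouOp Q + ouOp Q ^ 2 := by rw [hP]; ring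
    rw [gaussExp_carreDuChamp, this, map_add, gaussExp_C_mul, gaussExp_ouOp]; ring
  have hsum : Γ[P + Q, P + Q] = Γ[P, P] + C 2 * Γ[P, Q] + Γ[Q, Q] := by
    rw [carreDuChamp_comm, map_add, carreDuChamp_comm _ P, carreDuChamp_comm _ Q, map_add, map_add,
      carreDuChamp_comm Q P, map_ofNat]
    ring
  have hnonneg := gaussExp_carreDuChamp_self_nonneg (P + Q)
  rw [hsum, map_add, map_add, gaussExp_C_mul, hcross] at hnonneg
  rw [hsq, hmean]
  linarith [gaussExp_carreDuChamp_self_le_ouOp_sq Q]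

end OrnsteinUhlenbeck

local notation "Γ[" P "," Q "]" => carreDuChamp P Q

section Eigenpolynomials

variable {ι : Type} [Fintype ι]

/-- Eigenpolynomials of `-L` with eigenvalue `d`, of total degree at most `d`. Every element of
the Wiener chaos of degree `d` is one (`isOUEigen_of_mem_chaos`). -/
structure IsOUEigen (d : ℕ) (P : MvPolynomial ι ℝ) : Prop where
  totalDegree_le : P.totalDegree ≤ d
  ouOp_eq : ouOp P = C (-(d : ℝ)) * P

lemma IsOUEigen.gaussExp_carreDuChamp_self {k : ℕ} {G : MvPolynomial ι ℝ} (h : IsOUEigen k G) :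
    𝐄 Γ[G, G] = k * 𝐄 (G ^ 2) := by
  rw [gaussExp_carreDuChamp, h.ouOp_eq, mul_left_comm, gaussExp_C_mul, sq]
  ring

lemma IsOUEigen.mul_gaussExp_pow_four {k : ℕ} {G : MvPolynomial ι ℝ} (h : IsOUEigen k G) :
    k * 𝐄 (G ^ 4) = 3 * 𝐄 (G ^ 2 * Γ[G, G]) := by
  have ibp := gaussExp_carreDuChamp (G ^ 3) G
  have chain : Γ[G ^ 3, G] = C 3 * (G ^ 2 * Γ[G, G]) := by
    rw [carreDuChamp_comm, Derivation.leibniz_pow, map_ofNat]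
    simp only [smul_eq_mul, nsmul_eq_mul]
    ring
  have eigen : G ^ 3 * ouOp G = C (-(k : ℝ)) * G ^ 4 := by rw [h.ouOp_eq]; ring
  rw [chain, eigen, gaussExp_C_mul, gaussExp_C_mul] at ibp
  linarith

lemma IsOUEigen.gaussExp_carreDuChamp_self_sq_le {k : ℕ} {G : MvPolynomial ι ℝ}
    (h : IsOUEigen k G) : 𝐄 (Γ[G, G] ^ 2) ≤ k ^ 2 / 3 * 𝐄 (G ^ 4) := by
  have hdeg : (G ^ 2).totalDegree ≤ 2 * k :=
    (totalDegree_pow _ _).trans (Nat.mul_le_mul_left 2 h.totalDegree_le)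
  have hL : ouOp (G ^ 2) = C 2 * Γ[G, G] - C (2 * (k : ℝ)) * G ^ 2 := by
    rw [sq, ouOp_mul, h.ouOp_eq]; simp only [map_mul, C_neg, map_ofNat]; ring
  have hL_sq : ouOp (G ^ 2) ^ 2 = C 4 * Γ[G, G] ^ 2 - C (8 * (k : ℝ)) * (G ^ 2 * Γ[G, G])
      + C (4 * (k : ℝ) ^ 2) * G ^ 4 := by
    rw [hL]; simp only [map_mul, map_pow, map_ofNat]; ring
  have hmul_L : G ^ 2 * ouOp (G ^ 2) = C 2 * (G ^ 2 * Γ[G, G]) - C (2 * (k : ℝ)) * G ^ 4 := by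
    rw [hL]; simp only [map_mul, map_ofNat]; ring
  have spectral := gaussExp_ouOp_sq_le hdeg
  rw [gaussExp_carreDuChamp, hL_sq, hmul_L] at spectral
  simp only [map_add, map_sub, gaussExp_C_mul] at spectral
  push_cast at spectral
  nlinarith [h.mul_gaussExp_pow_four]

/-- The derivative `∂ₕ = ∑ i, hᵢ ∂ᵢ` of polynomials in the direction `h`. -/
noncomputable def dirDeriv (h : ι → ℝ) : Derivation ℝ (MvPolynomial ι ℝ) (MvPolynomial ι ℝ) :=
  ∑ i, (C (h i) : MvPolynomial ι ℝ) • pderiv i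

lemma dirDeriv_apply (h : ι → ℝ) (P : MvPolynomial ι ℝ) :
    dirDeriv h P = ∑ i, C (h i) * pderiv i P :=
  sum_smul_pderiv_apply _ _

lemma eval_dirDeriv (h x : ι → ℝ) (P : MvPolynomial ι ℝ) :
    eval x (dirDeriv h P) = ∑ i, h i * eval x (pderiv i P) := by
  simp [dirDeriv_apply]

lemma totalDegree_dirDeriv_le (h : ι → ℝ) (P : MvPolynomial ι ℝ) :
    (dirDeriv h P).totalDegree ≤ P.totalDegree - 1 := by
  rw [dirDeriv_apply]
  refine totalDegree_finsetSum_le fun i _ => (totalDegree_mul _ _).trans ?_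
  rw [totalDegree_C, zero_add]
  exact totalDegree_pderiv_le i P

lemma IsOUEigen.dirDeriv {k : ℕ} {F : MvPolynomial ι ℝ} (hF : IsOUEigen (k + 1) F) (h : ι → ℝ) :
    IsOUEigen k (dirDeriv h F) where
  totalDegree_le :=
    (totalDegree_dirDeriv_le h F).trans (Nat.sub_le_of_le_add hF.totalDegree_le)
  ouOp_eq := by
    have commute : ∀ i, ouOp (pderiv i F) = C (-(k : ℝ)) * pderiv i F := fun i => by
      rw [sub_eq_iff_eq_add.mp (pderiv_ouOp i F).symm, hF.ouOp_eq, pderiv_C_mul]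
      simp only [← smul_eq_C_mul, Nat.cast_succ]
      module
    simp only [dirDeriv_apply, map_sum, ouOp_C_mul, commute, Finset.mul_sum, mul_left_comm]

/-- The polynomial of the linear form `x ↦ ∑ i, vᵢ xᵢ`. -/
noncomputable def linearForm (v : ι → ℝ) : MvPolynomial ι ℝ := ∑ i, C (v i) * X i

lemma eval_linearForm (v x : ι → ℝ) : eval x (linearForm v) = ∑ i, v i * x i := by
  simp [linearForm]

lemma pderiv_linearForm (v : ι → ℝ) (i : ι) : pderiv i (linearForm v) = C (v i) := by
  classical
  simp [linearForm, pderiv_X, Pi.single_apply]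

lemma carreDuChamp_linearForm_self (v : ι → ℝ) :
    Γ[linearForm v, linearForm v] = C (∑ i, v i ^ 2) := by
  simp only [carreDuChamp_apply, pderiv_linearForm, map_sum, sq, C_mul]

lemma isOUEigen_linearForm (v : ι → ℝ) : IsOUEigen 1 (linearForm v) where
  totalDegree_le := totalDegree_finsetSum_le fun i _ => (totalDegree_mul _ _).trans (by simp)
  ouOp_eq := by
    simp only [ouOp_apply, pderiv_linearForm, pderiv_C]
    simp [linearForm, mul_comm]

lemma gaussExp_linearForm_sq (v : ι → ℝ) : 𝐄 (linearForm v ^ 2) = ∑ i, v i ^ 2 := by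
  have := (isOUEigen_linearForm v).gaussExp_carreDuChamp_self
  rw [carreDuChamp_linearForm_self, gaussExp_C] at this
  simpa using this.symm

lemma gaussExp_linearForm_pow_four (v : ι → ℝ) :
    𝐄 (linearForm v ^ 4) = 3 * (∑ i, v i ^ 2) ^ 2 := by
  have := (isOUEigen_linearForm v).mul_gaussExp_pow_four
  rw [carreDuChamp_linearForm_self, mul_comm (_ ^ 2), gaussExp_C_mul,
    gaussExp_linearForm_sq] at this
  rw [sq (∑ i, _), ← this, Nat.cast_one, one_mul]

lemma integral_sum_mul_sq_gaussPi (v : ι → ℝ) :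
    ∫ x, (∑ i, x i * v i) ^ 2 ∂gaussPi ι = ∑ i, v i ^ 2 := by
  rw [← gaussExp_linearForm_sq]
  simp [gaussExp_apply, eval_linearForm, mul_comm]

end Eigenpolynomials

section JointPolynomials

/-- Functions of two groups of variables which are jointly polynomial. -/
def IsJointPolynomial {ι κ : Type} (f : (ι → ℝ) → (κ → ℝ) → ℝ) : Prop :=
  ∃ Φ : MvPolynomial (ι ⊕ κ) ℝ, ∀ h x, f h x = eval (Sum.elim h x) Φ

namespace IsJointPolynomial

variable {ι κ : Type} {f g : (ι → ℝ) → (κ → ℝ) → ℝ}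

lemma const (a : ℝ) : IsJointPolynomial fun (_ : ι → ℝ) (_ : κ → ℝ) => a :=
  ⟨C a, fun _ _ => (eval_C a).symm⟩

lemma left (P : MvPolynomial ι ℝ) :
    IsJointPolynomial fun (h : ι → ℝ) (_ : κ → ℝ) => eval h P :=
  ⟨rename Sum.inl P, fun h x => by rw [eval_rename, Sum.elim_comp_inl]⟩

lemma right (P : MvPolynomial κ ℝ) :
    IsJointPolynomial fun (_ : ι → ℝ) (x : κ → ℝ) => eval x P :=
  ⟨rename Sum.inr P, fun h x => by rw [eval_rename, Sum.elim_comp_inr]⟩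

lemma mul (hf : IsJointPolynomial f) (hg : IsJointPolynomial g) :
    IsJointPolynomial fun h x => f h x * g h x := by
  obtain ⟨Φ, hΦ⟩ := hf
  obtain ⟨Ψ, hΨ⟩ := hg
  exact ⟨Φ * Ψ, fun h x => by simp only [map_mul, hΦ, hΨ]⟩

lemma sub (hf : IsJointPolynomial f) (hg : IsJointPolynomial g) :
    IsJointPolynomial fun h x => f h x - g h x := by
  obtain ⟨Φ, hΦ⟩ := hf
  obtain ⟨Ψ, hΨ⟩ := hg
  exact ⟨Φ - Ψ, fun h x => by simp only [map_sub, hΦ, hΨ]⟩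

lemma pow (hf : IsJointPolynomial f) (n : ℕ) : IsJointPolynomial fun h x => f h x ^ n := by
  obtain ⟨Φ, hΦ⟩ := hf
  exact ⟨Φ ^ n, fun h x => by simp only [map_pow, hΦ]⟩

lemma sum {α : Type*} (s : Finset α) {f : α → (ι → ℝ) → (κ → ℝ) → ℝ}
    (hf : ∀ a, IsJointPolynomial (f a)) : IsJointPolynomial fun h x => ∑ a ∈ s, f a h x := by
  choose Φ hΦ using hf
  exact ⟨∑ a ∈ s, Φ a, fun h x => by simp only [map_sum, hΦ]⟩

lemma exists_eq_sum_mul [Finite ι] [Finite κ] (hf : IsJointPolynomial f) :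
    ∃ (S : Finset (ι ⊕ κ →₀ ℕ)) (P : (ι ⊕ κ →₀ ℕ) → MvPolynomial ι ℝ)
      (Q : (ι ⊕ κ →₀ ℕ) → MvPolynomial κ ℝ),
      ∀ h x, f h x = ∑ s ∈ S, eval h (P s) * eval x (Q s) := by
  cases nonempty_fintype ι
  cases nonempty_fintype κ
  obtain ⟨Φ, hΦ⟩ := hf
  refine ⟨Φ.support, fun s => C (coeff s Φ) * ∏ i, X i ^ s (Sum.inl i),
    fun s => ∏ j, X j ^ s (Sum.inr j), fun h x => ?_⟩
  rw [hΦ, eval_eq']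
  simp only [Fintype.prod_sum_type, Sum.elim_inl, Sum.elim_inr, map_mul, map_prod, map_pow, eval_C,
    eval_X, mul_assoc]

lemma exists_integral_eq_eval [Finite ι] [Fintype κ] (hf : IsJointPolynomial f) :
    ∃ P : MvPolynomial ι ℝ, ∀ h, ∫ x, f h x ∂gaussPi κ = eval h P := by
  obtain ⟨S, P, Q, hPQ⟩ := hf.exists_eq_sum_mul
  refine ⟨∑ s ∈ S, C (𝐄 (Q s)) * P s, fun h => ?_⟩
  simp only [hPQ, map_sum, map_mul, eval_C, gaussExp_apply]
  rw [integral_finsetSum _ fun s _ => (integrable_eval_gaussPi (Q s)).const_mul _]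
  exact Finset.sum_congr rfl fun s _ => by rw [integral_const_mul, mul_comm]

variable [Fintype ι] [Fintype κ]

lemma integrable (hf : IsJointPolynomial f) :
    Integrable (Function.uncurry f) ((gaussPi ι).prod (gaussPi κ)) := by
  obtain ⟨S, P, Q, hPQ⟩ := hf.exists_eq_sum_mul
  have : Function.uncurry f = fun z => ∑ s ∈ S, eval z.1 (P s) * eval z.2 (Q s) :=
    funext fun z => hPQ z.1 z.2
  rw [this]
  exact integrable_finsetSum _ fun s _ =>
    (integrable_eval_gaussPi (P s)).mul_prod (integrable_eval_gaussPi (Q s))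

lemma integral_integral_swap (hf : IsJointPolynomial f) :
    ∫ h, ∫ x, f h x ∂gaussPi κ ∂gaussPi ι = ∫ x, ∫ h, f h x ∂gaussPi ι ∂gaussPi κ :=
  MeasureTheory.integral_integral_swap hf.integrable

end IsJointPolynomial

lemma eval_carreDuChamp_dirDeriv {ι : Type} [Fintype ι] (a b : ι → ℝ) (F : MvPolynomial ι ℝ)
    (x : ι → ℝ) : eval x Γ[dirDeriv a F, dirDeriv b F] =
      ∑ k, ∑ l, a k * b l * eval x Γ[pderiv k F, pderiv l F] := by
  rw [dirDeriv_apply b, map_sum, map_sum, Finset.sum_comm]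
  refine Finset.sum_congr rfl fun l _ => ?_
  rw [← smul_eq_C_mul, Derivation.map_smul, smul_eval, carreDuChamp_comm, dirDeriv_apply, map_sum,
    map_sum, Finset.mul_sum]
  refine Finset.sum_congr rfl fun k _ => ?_
  rw [← smul_eq_C_mul, Derivation.map_smul, smul_eval, carreDuChamp_comm]
  ring

lemma isJointPolynomial_eval_carreDuChamp_dirDeriv {ι κ : Type} [Fintype ι]
    (A B : ι → MvPolynomial κ ℝ) (F : MvPolynomial ι ℝ) :
    IsJointPolynomial fun (z : κ → ℝ) (x : ι → ℝ) =>
      eval x Γ[dirDeriv (fun i => eval z (A i)) F, dirDeriv (fun i => eval z (B i)) F] := by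
  simp only [eval_carreDuChamp_dirDeriv]
  exact .sum _ fun k => .sum _ fun l => ((IsJointPolynomial.left (A k)).mul (.left (B l))).mul
    (.right _)

end JointPolynomials

section Hypercontractivity

variable {ι : Type} [Fintype ι]

lemma isJointPolynomial_eval_dirDeriv (P : MvPolynomial ι ℝ) :
    IsJointPolynomial fun h x : ι → ℝ => eval x (dirDeriv h P) := by
  simp only [eval_dirDeriv]
  exact .sum _ fun i => by simpa using (IsJointPolynomial.left (X i)).mul (.right (pderiv i P))

lemma integral_gaussExp_dirDeriv_pow (P : MvPolynomial ι ℝ) (n : ℕ) :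
    ∫ h, 𝐄 (dirDeriv h P ^ n) ∂gaussPi ι =
      ∫ x, 𝐄 (linearForm (fun i => eval x (pderiv i P)) ^ n) ∂gaussPi ι := by
  have := ((isJointPolynomial_eval_dirDeriv P).pow n).integral_integral_swap
  simpa only [gaussExp_apply, map_pow, eval_linearForm, eval_dirDeriv, mul_comm] using this

lemma integral_gaussExp_dirDeriv_sq (P : MvPolynomial ι ℝ) :
    ∫ h, 𝐄 (dirDeriv h P ^ 2) ∂gaussPi ι = 𝐄 Γ[P, P] := by
  rw [integral_gaussExp_dirDeriv_pow]
  simp only [gaussExp_linearForm_sq]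
  simp only [gaussExp_apply, eval_carreDuChamp_self, sqField]

lemma integral_gaussExp_dirDeriv_pow_four (P : MvPolynomial ι ℝ) :
    ∫ h, 𝐄 (dirDeriv h P ^ 4) ∂gaussPi ι = 3 * 𝐄 (Γ[P, P] ^ 2) := by
  rw [integral_gaussExp_dirDeriv_pow]
  simp only [gaussExp_linearForm_pow_four, integral_const_mul]
  simp only [gaussExp_apply, map_pow, eval_carreDuChamp_self, sqField]

lemma integrable_gaussExp_dirDeriv_pow (P : MvPolynomial ι ℝ) (n : ℕ) :
    Integrable (fun h => 𝐄 (dirDeriv h P ^ n)) (gaussPi ι) := by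
  simpa only [gaussExp_apply, map_pow, Function.uncurry_apply_pair]
    using ((isJointPolynomial_eval_dirDeriv P).pow n).integrable.integral_prod_left

lemma integral_gaussExp_dirDeriv_sq_sq_le (P : MvPolynomial ι ℝ) :
    ∫ h, 𝐄 (dirDeriv h P ^ 2) ^ 2 ∂gaussPi ι ≤ 3 * 𝐄 Γ[P, P] ^ 2 := by
  have joint := (isJointPolynomial_eval_dirDeriv P).pow 2
  obtain ⟨A, hA⟩ := joint.exists_integral_eq_eval
  have hA' : ∀ h, ∫ x, eval x (dirDeriv h P) ^ 2 ∂gaussPi ι = eval h A := hA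
  replace hA : ∀ h, 𝐄 (dirDeriv h P ^ 2) = eval h A := by
    simpa only [gaussExp_apply, map_pow] using hA
  have goal_eq : ∫ h, 𝐄 (dirDeriv h P ^ 2) ^ 2 ∂gaussPi ι = 𝐄 (A ^ 2) := by
    simp only [hA, gaussExp_apply, map_pow]
  rw [goal_eq]
  set a := 𝐄 (A ^ 2)
  have ha : 0 ≤ a := gaussExp_sq_nonneg A
  have jointA := (IsJointPolynomial.left (κ := ι) A).mul joint
  have fubini : a = ∫ x, ∫ h, eval h A * eval x (dirDeriv h P) ^ 2 ∂gaussPi ι ∂gaussPi ι := by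
    rw [← jointA.integral_integral_swap]
    simp only [integral_const_mul, hA', a, gaussExp_apply, map_pow, sq (eval _ A)]
  have slice_le : ∀ x, ∫ h, eval h A * eval x (dirDeriv h P) ^ 2 ∂gaussPi ι ≤
      √(3 * a) * eval x Γ[P, P] := fun x => by
    have cauchy := gaussExp_mul_sq_le A (linearForm (fun i => eval x (pderiv i P)) ^ 2)
    rw [← pow_mul, gaussExp_linearForm_pow_four] at cauchy
    rw [eval_carreDuChamp_self]
    refine le_of_sq_le_sq ?_ (mul_nonneg (Real.sqrt_nonneg _) (sqField_nonneg P x))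
    rw [mul_pow, Real.sq_sqrt (by positivity)]
    refine le_trans (le_of_eq ?_) (cauchy.trans_eq (by simp only [sqField, a]; ring))
    simp only [gaussExp_apply, map_mul, map_pow, eval_linearForm, eval_dirDeriv, mul_comm]
  have le_sqrt : a ≤ √(3 * a) * 𝐄 Γ[P, P] := by
    calc a ≤ ∫ x, √(3 * a) * eval x Γ[P, P] ∂gaussPi ι := fubini.trans_le
          (integral_mono jointA.integrable.integral_prod_right
            ((integrable_eval_gaussPi _).const_mul _) slice_le)
      _ = √(3 * a) * 𝐄 Γ[P, P] := integral_const_mul _ _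
  refine le_of_sq_le_mul_self (by positivity) ((pow_le_pow_left₀ ha le_sqrt 2).trans_eq ?_)
  rw [mul_pow, Real.sq_sqrt (by positivity)]
  ring

/-- The constants of the hypercontractive estimate `𝐄 P⁴ ≤ c_D (𝐄 P²)²` for polynomials of total
degree at most `D`. -/
noncomputable def hyperConst : ℕ → ℝ
  | 0 => 2
  | D + 1 => 2 + 16 * (D + 1 : ℕ) ^ 2 * hyperConst D

lemma hyperConst_nonneg (D : ℕ) : 0 ≤ hyperConst D := by
  induction D with
  | zero => simp [hyperConst]
  | succ D ih => rw [hyperConst]; positivity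

lemma gaussExp_carreDuChamp_self_sq_le_of_dirDeriv {c : ℝ} (hc : 0 ≤ c) {P : MvPolynomial ι ℝ}
    (hyp : ∀ h, 𝐄 (dirDeriv h P ^ 4) ≤ c * 𝐄 (dirDeriv h P ^ 2) ^ 2) :
    𝐄 (Γ[P, P] ^ 2) ≤ c * 𝐄 Γ[P, P] ^ 2 := by
  have integrated : 3 * 𝐄 (Γ[P, P] ^ 2) ≤ c * (3 * 𝐄 Γ[P, P] ^ 2) := by
    rw [← integral_gaussExp_dirDeriv_pow_four]
    refine (integral_mono (integrable_gaussExp_dirDeriv_pow P 4) (.const_mul ?_ c) hyp).trans ?_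
    · obtain ⟨A, hA⟩ := ((isJointPolynomial_eval_dirDeriv P).pow 2).exists_integral_eq_eval
      have := integrable_eval_gaussPi (A ^ 2)
      simp only [map_pow] at this
      simpa only [gaussExp_apply, map_pow, hA] using this
    · rw [integral_const_mul]
      gcongr
      exact integral_gaussExp_dirDeriv_sq_sq_le P
  linarith

lemma gaussExp_carreDuChamp_sq_self_le (P : MvPolynomial ι ℝ) :
    𝐄 Γ[P ^ 2, P ^ 2] ≤ 1 / 2 * 𝐄 (P ^ 4) + 8 * 𝐄 (Γ[P, P] ^ 2) := by
  rw [← gaussExp_C_mul, ← gaussExp_C_mul 8, ← map_add]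
  refine gaussExp_mono fun x => ?_
  have chain : Γ[P ^ 2, P ^ 2] = C 4 * P ^ 2 * Γ[P, P] := by
    rw [sq, carreDuChamp_mul, carreDuChamp_comm, carreDuChamp_mul, map_ofNat]; ring
  simp only [chain, map_mul, map_pow, map_add, eval_C]
  linarith [sq_nonneg (eval x P ^ 2 - 4 * eval x Γ[P, P])]

/- Hypercontractivity, by induction on the degree: the Poincaré inequality for `P ^ 2` reduces it to
the directional derivatives of `P`. -/
lemma gaussExp_pow_four_le {D : ℕ} {P : MvPolynomial ι ℝ} (hP : P.totalDegree ≤ D) :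
    𝐄 (P ^ 4) ≤ hyperConst D * 𝐄 (P ^ 2) ^ 2 := by
  induction D generalizing P with
  | zero =>
    rw [totalDegree_eq_zero_iff_eq_C.mp (Nat.le_zero.mp hP)]
    simp only [← C_pow, gaussExp_C, hyperConst]
    linarith [sq_nonneg (coeff 0 P ^ 2)]
  | succ D ih =>
    have hc := hyperConst_nonneg D
    have hΓ : 𝐄 (Γ[P, P] ^ 2) ≤ hyperConst D * ((D + 1 : ℕ) * 𝐄 (P ^ 2)) ^ 2 := by
      refine (gaussExp_carreDuChamp_self_sq_le_of_dirDeriv hc fun h =>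
        ih ((totalDegree_dirDeriv_le h P).trans (Nat.sub_le_of_le_add hP))).trans ?_
      gcongr
      · exact gaussExp_carreDuChamp_self_nonneg P
      · exact gaussExp_carreDuChamp_self_le hP
    have poincare := gaussian_poincare (P ^ 2)
    rw [← pow_mul] at poincare
    rw [hyperConst]
    linarith [gaussExp_carreDuChamp_sq_self_le P]

lemma gaussExp_carreDuChamp_self_sq_le {D : ℕ} {P : MvPolynomial ι ℝ} (hP : P.totalDegree ≤ D) :
    𝐄 (Γ[P, P] ^ 2) ≤ hyperConst D * (D * 𝐄 (P ^ 2)) ^ 2 := by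
  have hc := hyperConst_nonneg D
  refine (gaussExp_carreDuChamp_self_sq_le_of_dirDeriv hc fun h => gaussExp_pow_four_le
    ((totalDegree_dirDeriv_le h P).trans ((Nat.sub_le _ _).trans hP))).trans ?_
  gcongr
  · exact gaussExp_carreDuChamp_self_nonneg P
  · exact gaussExp_carreDuChamp_self_le hP

end Hypercontractivity

section RandomDirections

variable {ι : Type} [Fintype ι]

lemma gaussExp_sub_C_sq (P : MvPolynomial ι ℝ) (c : ℝ) :
    𝐄 ((P - C c) ^ 2) = 𝐄 (P ^ 2) - 2 * c * 𝐄 P + c ^ 2 := by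
  have expand : (P - C c) ^ 2 = P ^ 2 - C (2 * c) * P + C (c ^ 2) := by
    simp only [map_mul, map_pow, map_ofNat]; ring
  rw [expand, map_add, map_sub, gaussExp_C_mul, gaussExp_C]

lemma IsOUEigen.gaussExp_carreDuChamp_self_sub_C_sq_le {k : ℕ} {G : MvPolynomial ι ℝ}
    (h : IsOUEigen k G) (c : ℝ) : 𝐄 ((Γ[G, G] - C (k * c)) ^ 2) ≤
      k ^ 2 * (1 / 3 * 𝐄 (G ^ 4) - 2 * c * 𝐄 (G ^ 2) + c ^ 2) := by
  rw [gaussExp_sub_C_sq, h.gaussExp_carreDuChamp_self]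
  linarith [h.gaussExp_carreDuChamp_self_sq_le]

/-- The Gaussian mean square distance of `Γ[∂_a F, ∂_b F]` from the constant `d`. -/
noncomputable def dirDefect (F : MvPolynomial ι ℝ) (d : ℝ) (a b : ι → ℝ) : ℝ :=
  𝐄 ((Γ[dirDeriv a F, dirDeriv b F] - C d) ^ 2)

lemma dirDefect_nonneg (F : MvPolynomial ι ℝ) (d : ℝ) (a b : ι → ℝ) : 0 ≤ dirDefect F d a b :=
  gaussExp_sq_nonneg _

lemma isJointPolynomial_dirDefect (F : MvPolynomial ι ℝ) (d : ℝ) :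
    IsJointPolynomial (dirDefect F d) := by
  obtain ⟨Q, hQ⟩ := (((isJointPolynomial_eval_carreDuChamp_dirDeriv (fun i => X (Sum.inl i))
    (fun i => X (Sum.inr i)) F).sub (.const d)).pow 2).exists_integral_eq_eval
  refine ⟨Q, fun a b => ?_⟩
  simpa only [eval_X, Sum.elim_inl, Sum.elim_inr, dirDefect, gaussExp_apply, map_pow, map_sub,
    eval_C] using hQ (Sum.elim a b)

lemma integrable_dirDefect_self (F : MvPolynomial ι ℝ) (d : ℝ) :
    Integrable (fun h => dirDefect F d h h) (gaussPi ι) := by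
  obtain ⟨Q, hQ⟩ := isJointPolynomial_dirDefect F d
  simpa only [hQ, eval_rename, Sum.comp_elim, Function.comp_id] using
    integrable_eval_gaussPi (rename (Sum.elim id id) Q)

lemma integral_dirDefect_self (F : MvPolynomial ι ℝ) (d : ℝ) :
    ∫ h, dirDefect F d h h ∂gaussPi ι =
      ∫ x, ∫ h, (eval x Γ[dirDeriv h F, dirDeriv h F] - d) ^ 2 ∂gaussPi ι ∂gaussPi ι := by
  have joint := ((isJointPolynomial_eval_carreDuChamp_dirDeriv X X F).sub (.const d)).pow 2
  simp only [eval_X] at joint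
  rw [← joint.integral_integral_swap]
  simp only [dirDefect, gaussExp_apply, map_pow, map_sub, eval_C]

lemma IsOUEigen.integral_dirDefect_self_le {k : ℕ} {F : MvPolynomial ι ℝ}
    (hF : IsOUEigen (k + 1) F) (c : ℝ) :
    ∫ h, dirDefect F (k * c) h h ∂gaussPi ι ≤ k ^ 2 * 𝐄 ((Γ[F, F] - C c) ^ 2) := by
  have pointwise : ∀ h, dirDefect F (k * c) h h ≤
      k ^ 2 * (1 / 3 * 𝐄 (_root_.dirDeriv h F ^ 4) - 2 * c * 𝐄 (_root_.dirDeriv h F ^ 2) + c ^ 2) :=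
    fun h => (hF.dirDeriv h).gaussExp_carreDuChamp_self_sub_C_sq_le c
  have h4 := (integrable_gaussExp_dirDeriv_pow F 4).const_mul (1 / 3)
  have h2 := (integrable_gaussExp_dirDeriv_pow F 2).const_mul (2 * c)
  have h42 : Integrable (fun h => 1 / 3 * 𝐄 (_root_.dirDeriv h F ^ 4) -
      2 * c * 𝐄 (_root_.dirDeriv h F ^ 2)) (gaussPi ι) := h4.sub h2
  refine (integral_mono (integrable_dirDefect_self F _)
    ((h42.add (integrable_const _)).const_mul _) pointwise).trans_eq ?_
  rw [integral_const_mul, integral_add' h42 (integrable_const _), integral_sub h4 h2,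
    integral_const_mul, integral_const_mul, integral_gaussExp_dirDeriv_pow_four,
    integral_gaussExp_dirDeriv_sq, gaussExp_sub_C_sq]
  simp

/-- The polynomial of the quadratic form `a ↦ ∑ k l, a_k W_{kl} a_l`. -/
noncomputable def quadForm (W : ι → ι → ℝ) : MvPolynomial ι ℝ := ∑ k, X k * linearForm (W k)

lemma eval_quadForm (W : ι → ι → ℝ) (a : ι → ℝ) :
    eval a (quadForm W) = ∑ k, ∑ l, a k * a l * W k l := by
  simp only [quadForm, map_sum, map_mul, eval_X, eval_linearForm, Finset.mul_sum]
  exact Finset.sum_congr rfl fun k _ => Finset.sum_congr rfl fun l _ => by ring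

lemma pderiv_quadForm {W : ι → ι → ℝ} (hW : ∀ k l, W k l = W l k) (j : ι) :
    pderiv j (quadForm W) = 2 * linearForm (W j) := by
  classical
  simp only [quadForm, map_sum, Derivation.leibniz, pderiv_linearForm, pderiv_X, Pi.single_apply,
    smul_eq_mul, mul_ite, mul_one, mul_zero, Finset.sum_add_distrib, Finset.sum_ite_eq',
    Finset.mem_univ, if_true, two_mul]
  congr 1
  exact Finset.sum_congr rfl fun k _ => by rw [hW k j, mul_comm]

lemma totalDegree_quadForm_le (W : ι → ι → ℝ) : (quadForm W).totalDegree ≤ 2 :=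
  totalDegree_finsetSum_le fun k _ => (totalDegree_mul _ _).trans <|
    add_le_add (totalDegree_X k).le (isOUEigen_linearForm (W k)).totalDegree_le

lemma integral_sum_sq_le_of_symm {W : ι → ι → ℝ} (hW : ∀ k l, W k l = W l k) (d : ℝ) :
    ∫ a, ∑ l, (∑ k, a k * W k l) ^ 2 ∂gaussPi ι ≤
      1 / 2 * ∫ a, (∑ k, ∑ l, a k * a l * W k l - d) ^ 2 ∂gaussPi ι := by
  have degree_le : (quadForm W - C d).totalDegree ≤ 2 :=
    (totalDegree_sub _ _).trans (max_le (totalDegree_quadForm_le W) (by simp))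
  have spectral := gaussExp_carreDuChamp_self_le degree_le
  have lhs : 𝐄 Γ[quadForm W - C d, quadForm W - C d] =
      4 * ∫ a, ∑ l, (∑ k, a k * W k l) ^ 2 ∂gaussPi ι := by
    simp only [gaussExp_apply, eval_carreDuChamp_self, sqField]
    rw [← integral_const_mul]
    congr 1 with a
    rw [Finset.mul_sum]
    refine Finset.sum_congr rfl fun l _ => ?_
    simp only [map_sub, pderiv_C, pderiv_quadForm hW, sub_zero, map_mul, map_ofNat,
      eval_linearForm, hW l, mul_pow, mul_comm]
    norm_num
  rw [lhs] at spectral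
  simp only [gaussExp_apply, map_pow, map_sub, eval_C, eval_quadForm] at spectral
  push_cast at spectral
  linarith

lemma integral_dirDefect_zero (F : MvPolynomial ι ℝ) (a : ι → ℝ) :
    ∫ b, dirDefect F 0 a b ∂gaussPi ι =
      ∫ x, ∑ l, (∑ k, a k * eval x Γ[pderiv k F, pderiv l F]) ^ 2 ∂gaussPi ι := by
  have joint := (isJointPolynomial_eval_carreDuChamp_dirDeriv (fun i => C (a i)) X F).pow 2
  simp only [eval_X, eval_C] at joint
  simp only [dirDefect, C_0, sub_zero, gaussExp_apply, map_pow]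
  rw [joint.integral_integral_swap]
  congr 1 with x
  rw [← integral_sum_mul_sq_gaussPi]
  congr 1 with b
  rw [eval_carreDuChamp_dirDeriv, Finset.sum_comm]
  simp only [Finset.mul_sum, mul_left_comm, mul_assoc]

lemma integral_integral_dirDefect_zero_le (F : MvPolynomial ι ℝ) (d : ℝ) :
    ∫ a, ∫ b, dirDefect F 0 a b ∂gaussPi ι ∂gaussPi ι ≤
      1 / 2 * ∫ h, dirDefect F d h h ∂gaussPi ι := by
  have joint : IsJointPolynomial fun a x : ι → ℝ =>
      ∑ l, (∑ k, a k * eval x Γ[pderiv k F, pderiv l F]) ^ 2 :=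
    .sum _ fun l => (IsJointPolynomial.sum _ fun k => by
      simpa only [eval_X] using (IsJointPolynomial.left (X k)).mul (.right _)).pow 2
  have jointD := ((isJointPolynomial_eval_carreDuChamp_dirDeriv X X F).sub (.const d)).pow 2
  simp only [eval_X] at jointD
  simp only [integral_dirDefect_zero]
  rw [joint.integral_integral_swap, integral_dirDefect_self, ← integral_const_mul]
  refine integral_mono joint.integrable.integral_prod_right
    (jointD.integrable.integral_prod_right.const_mul _) fun x => ?_
  simpa only [eval_carreDuChamp_dirDeriv] using
    integral_sum_sq_le_of_symm (W := fun k l => eval x Γ[pderiv k F, pderiv l F])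
      (fun k l => by rw [carreDuChamp_comm]) d

lemma measurePreserving_eval_pair {κ : Type*} [Fintype κ] {α : κ → Type*}
    [∀ i, MeasurableSpace (α i)] (μ : ∀ i, Measure (α i)) [∀ i, IsProbabilityMeasure (μ i)]
    {i j : κ} (hij : i ≠ j) :
    MeasurePreserving (fun N : ∀ i, α i => (N i, N j)) (Measure.pi μ) ((μ i).prod (μ j)) := by
  have indep : IndepFun (fun N : ∀ i, α i => N i) (fun N => N j) (Measure.pi μ) :=
    (iIndepFun_pi (X := fun _ => id) fun _ => aemeasurable_id).indepFun hij
  rw [indepFun_iff_map_prod_eq_prod_map_map (measurable_pi_apply i).aemeasurable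
    (measurable_pi_apply j).aemeasurable, (measurePreserving_eval μ i).map_eq,
    (measurePreserving_eval μ j).map_eq] at indep
  exact ⟨by fun_prop, indep⟩

variable {κ : Type} [Fintype κ]

/-- The law of a family, indexed by `κ`, of independent standard Gaussian vectors of `ℝ^ι`. -/
noncomputable def gaussVectors (κ ι : Type) [Fintype κ] [Fintype ι] : Measure (κ → ι → ℝ) :=
  Measure.pi fun _ => gaussPi ι

instance : IsProbabilityMeasure (gaussVectors κ ι) := by unfold gaussVectors; infer_instance

lemma measurePreserving_eval_gaussVectors (i : κ) :
    MeasurePreserving (fun N : κ → ι → ℝ => N i) (gaussVectors κ ι) (gaussPi ι) :=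
  measurePreserving_eval _ i

lemma integrable_dirDefect_gaussVectors (F : MvPolynomial ι ℝ) (d : ℝ) (i j : κ) :
    Integrable (fun N => dirDefect F d (N i) (N j)) (gaussVectors κ ι) := by
  rcases eq_or_ne i j with rfl | hij
  · exact (measurePreserving_eval_gaussVectors i).integrable_comp_of_integrable
      (integrable_dirDefect_self F d)
  · exact (measurePreserving_eval_pair (fun _ => gaussPi ι) hij).integrable_comp_of_integrable
      (isJointPolynomial_dirDefect F d).integrable

lemma dirDeriv_sum_smul (F : MvPolynomial ι ℝ) (N : κ → ι → ℝ) (u : κ → ℝ) :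
    dirDeriv (∑ j, u j • N j) F = ∑ j, C (u j) * dirDeriv (N j) F := by
  simp only [dirDeriv_apply, Finset.sum_apply, Pi.smul_apply, smul_eq_mul, map_sum, map_mul,
    Finset.sum_mul, Finset.mul_sum, mul_assoc]
  exact Finset.sum_comm

lemma eval_carreDuChamp_dirDeriv_sum_smul (F : MvPolynomial ι ℝ) (N : κ → ι → ℝ) (u : κ → ℝ)
    (x : ι → ℝ) : eval x Γ[dirDeriv (∑ j, u j • N j) F, dirDeriv (∑ j, u j • N j) F] =
      ∑ i, ∑ j, u i * u j * eval x Γ[dirDeriv (N i) F, dirDeriv (N j) F] := by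
  simp only [dirDeriv_sum_smul, ← smul_eq_C_mul, map_sum, Derivation.map_smul, smul_eval,
    carreDuChamp_comm (∑ _, _)]
  exact Finset.sum_congr rfl fun i _ => Finset.sum_congr rfl fun j _ => by
    rw [carreDuChamp_comm, Derivation.map_smul, smul_eval, carreDuChamp_comm, mul_left_comm,
      mul_assoc]

variable [DecidableEq κ]

/-- The sum over `i, j` of the mean square distances of `Γ[∂_{N i} F, ∂_{N j} F]` from the entries
of `d` times the identity matrix. -/
noncomputable def totalDefect (F : MvPolynomial ι ℝ) (d : ℝ) (N : κ → ι → ℝ) : ℝ :=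
  ∑ i, ∑ j, dirDefect F (if i = j then d else 0) (N i) (N j)

lemma totalDefect_nonneg (F : MvPolynomial ι ℝ) (d : ℝ) (N : κ → ι → ℝ) : 0 ≤ totalDefect F d N :=
  Finset.sum_nonneg fun _ _ => Finset.sum_nonneg fun _ _ => dirDefect_nonneg _ _ _ _

lemma continuous_totalDefect (F : MvPolynomial ι ℝ) (d : ℝ) :
    Continuous (totalDefect F d : (κ → ι → ℝ) → ℝ) := by
  refine continuous_finsetSum _ fun i _ => continuous_finsetSum _ fun j _ => ?_
  obtain ⟨Q, hQ⟩ := isJointPolynomial_dirDefect F (if i = j then d else 0)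
  simp only [hQ]
  refine (MvPolynomial.continuous_eval Q).comp (continuous_pi fun s => ?_)
  cases s
  · exact (continuous_apply _).comp (continuous_apply i)
  · exact (continuous_apply _).comp (continuous_apply j)

lemma integrable_totalDefect (F : MvPolynomial ι ℝ) (d : ℝ) :
    Integrable (totalDefect F d) (gaussVectors κ ι) :=
  integrable_finsetSum _ fun i _ => integrable_finsetSum _ fun j _ =>
    integrable_dirDefect_gaussVectors F _ i j

lemma IsOUEigen.integral_dirDefect_gaussVectors_le {k : ℕ} {F : MvPolynomial ι ℝ}
    (hF : IsOUEigen (k + 1) F) (c : ℝ) (i j : κ) :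
    ∫ N, dirDefect F (if i = j then k * c else 0) (N i) (N j) ∂gaussVectors κ ι ≤
      k ^ 2 * 𝐄 ((Γ[F, F] - C c) ^ 2) := by
  have diag := hF.integral_dirDefect_self_le c
  split_ifs with hij
  · subst hij
    rwa [← (measurePreserving_eval_gaussVectors i).map_eq, integral_map
      (measurePreserving_eval_gaussVectors i).measurable.aemeasurable ?_] at diag
    rw [(measurePreserving_eval_gaussVectors i).map_eq]
    exact (integrable_dirDefect_self F _).aestronglyMeasurable
  · have pair := measurePreserving_eval_pair (fun _ : κ => gaussPi ι) hij
    have joint := (isJointPolynomial_dirDefect F 0).integrable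
    have off_diag := integral_integral_dirDefect_zero_le F (k * c)
    rw [integral_integral joint, ← pair.map_eq, integral_map (by fun_prop)
      (by rw [pair.map_eq]; exact joint.aestronglyMeasurable)] at off_diag
    have : 0 ≤ ∫ h, dirDefect F (k * c) h h ∂gaussPi ι :=
      integral_nonneg fun h => dirDefect_nonneg _ _ _ _
    rw [gaussVectors]
    linarith

lemma IsOUEigen.integral_totalDefect_le {k : ℕ} {F : MvPolynomial ι ℝ} (hF : IsOUEigen (k + 1) F)
    (c : ℝ) : ∫ N, totalDefect F (k * c) N ∂gaussVectors κ ι ≤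
      Fintype.card κ ^ 2 * (k ^ 2 * 𝐄 ((Γ[F, F] - C c) ^ 2)) := by
  have int := integrable_dirDefect_gaussVectors (κ := κ) F
  simp only [totalDefect]
  rw [integral_finsetSum _ fun i _ => integrable_finsetSum _ fun j _ => int _ i j]
  calc ∑ i, ∫ N, ∑ j, dirDefect F (if i = j then k * c else 0) (N i) (N j) ∂gaussVectors κ ι
      ≤ ∑ _i : κ, ∑ _j : κ, k ^ 2 * 𝐄 ((Γ[F, F] - C c) ^ 2) :=
        Finset.sum_le_sum fun i _ => by
          rw [integral_finsetSum _ fun j _ => int _ i j]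
          exact Finset.sum_le_sum fun j _ => hF.integral_dirDefect_gaussVectors_le c i j
    _ = _ := by simp; ring

lemma gaussExp_carreDuChamp_dirDeriv_sum_smul_le (F : MvPolynomial ι ℝ) (d : ℝ) (N : κ → ι → ℝ)
    {u : κ → ℝ} (hu : ∑ j, u j ^ 2 = 1) :
    𝐄 ((Γ[dirDeriv (∑ j, u j • N j) F, dirDeriv (∑ j, u j • N j) F] - C d) ^ 2) ≤
      totalDefect F d N := by
  simp only [totalDefect, dirDefect, ← map_sum]
  refine gaussExp_mono fun x => ?_
  set w : κ × κ → ℝ := fun z => eval x Γ[dirDeriv (N z.1) F, dirDeriv (N z.2) F] -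
    if z.1 = z.2 then d else 0
  have expand : eval x (Γ[dirDeriv (∑ j, u j • N j) F, dirDeriv (∑ j, u j • N j) F] - C d) =
      ∑ z : κ × κ, u z.1 * u z.2 * w z := by
    simp only [w, map_sub, eval_C, eval_carreDuChamp_dirDeriv_sum_smul, Fintype.sum_prod_type,
      mul_sub, Finset.sum_sub_distrib, mul_ite, mul_zero, Finset.sum_ite_eq, Finset.mem_univ,
      if_true, ← Finset.sum_mul, ← sq, hu, one_mul]
  have unit : ∑ z : κ × κ, (u z.1 * u z.2) ^ 2 = 1 := by
    simp only [Fintype.sum_prod_type, mul_pow, ← Finset.mul_sum, hu, mul_one]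
  rw [map_pow, expand]
  refine (Finset.sum_mul_sq_le_sq_mul_sq _ _ _).trans_eq ?_
  simp only [unit, one_mul, Fintype.sum_prod_type, w, map_sum, map_pow, map_sub, eval_C]

end RandomDirections

section FourierDecay

variable {ι : Type}

/-- The oscillating factor `exp (i t G)`. -/
noncomputable def phase (G : MvPolynomial ι ℝ) (t : ℝ) (x : ι → ℝ) : ℂ :=
  Complex.exp ((t * eval x G : ℝ) * Complex.I)

lemma norm_phase (G : MvPolynomial ι ℝ) (t : ℝ) (x : ι → ℝ) : ‖phase G t x‖ = 1 :=
  Complex.norm_exp_ofReal_mul_I _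

lemma continuous_phase (G : MvPolynomial ι ℝ) (t : ℝ) : Continuous (phase G t) := by
  unfold phase
  have := MvPolynomial.continuous_eval G
  fun_prop

variable [Fintype ι]

/-- The inverse of the square field of `G`, regularised by `η > 0` so as to be bounded. -/
noncomputable def regInv (G : MvPolynomial ι ℝ) (η : ℝ) (x : ι → ℝ) : ℝ := (sqField G x + η)⁻¹

lemma continuous_sqField (G : MvPolynomial ι ℝ) : Continuous (sqField G) := by
  simpa only [eval_carreDuChamp_self] using MvPolynomial.continuous_eval Γ[G, G]

section RegInv

variable (G : MvPolynomial ι ℝ) {η : ℝ} (hη : 0 < η)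
include hη

lemma sqField_add_pos (x : ι → ℝ) : 0 < sqField G x + η :=
  add_pos_of_nonneg_of_pos (sqField_nonneg G x) hη

lemma regInv_pos (x : ι → ℝ) : 0 < regInv G η x := inv_pos.mpr (sqField_add_pos G hη x)

lemma regInv_le (x : ι → ℝ) : regInv G η x ≤ η⁻¹ :=
  inv_anti₀ hη (le_add_of_nonneg_left (sqField_nonneg G x))

lemma sqField_mul_regInv (x : ι → ℝ) : sqField G x * regInv G η x = 1 - η * regInv G η x := by
  have := (sqField_add_pos G hη x).ne'
  unfold regInv; field_simp; ring

lemma sqField_mul_regInv_nonneg (x : ι → ℝ) : 0 ≤ sqField G x * regInv G η x :=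
  mul_nonneg (sqField_nonneg G x) (regInv_pos G hη x).le

lemma sqField_mul_regInv_le_one (x : ι → ℝ) : sqField G x * regInv G η x ≤ 1 := by
  rw [sqField_mul_regInv G hη]
  linarith [mul_pos hη (regInv_pos G hη x)]

lemma continuous_regInv : Continuous (regInv G η) :=
  ((continuous_sqField G).add continuous_const).inv₀ fun x => (sqField_add_pos G hη x).ne'

lemma integrable_regInv_pow (n : ℕ) : Integrable (fun x => regInv G η x ^ n) (gaussPi ι) := by
  refine .mono' (integrable_const (η⁻¹ ^ n))
    ((continuous_regInv G hη).pow n).aestronglyMeasurable (ae_of_all _ fun x => ?_)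
  rw [Real.norm_of_nonneg (pow_nonneg (regInv_pos G hη x).le _)]
  exact pow_le_pow_left₀ (regInv_pos G hη x).le (regInv_le G hη x) n

end RegInv

lemma integrable_phase (G : MvPolynomial ι ℝ) (t : ℝ) : Integrable (phase G t) (gaussPi ι) :=
  .mono' (integrable_const 1) (continuous_phase G t).aestronglyMeasurable
    (ae_of_all _ fun x => (norm_phase G t x).le)

/-- The integrand `exp (i t G) A R ^ b`, where `R` is the regularised inverse of `Γ[G, G]`. -/
noncomputable def oscFun (G : MvPolynomial ι ℝ) (η t : ℝ) (A : MvPolynomial ι ℝ) (b : ℕ)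
    (x : ι → ℝ) : ℂ := phase G t x * ((eval x A * regInv G η x ^ b : ℝ) : ℂ)

/-- The Gaussian oscillatory integral of `exp (i t G) A R ^ b`. -/
noncomputable def oscInt (G : MvPolynomial ι ℝ) (η t : ℝ) (A : MvPolynomial ι ℝ) (b : ℕ) : ℂ :=
  ∫ x, oscFun G η t A b x ∂gaussPi ι

lemma oscInt_C_mul (G : MvPolynomial ι ℝ) (η t a : ℝ) (A : MvPolynomial ι ℝ) (b : ℕ) :
    oscInt G η t (C a * A) b = a * oscInt G η t A b := by
  rw [oscInt, oscInt, ← integral_const_mul]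
  congr 1 with x
  simp only [oscFun, map_mul, eval_C]; push_cast; ring

section OscInt

variable (G : MvPolynomial ι ℝ) {η : ℝ} (hη : 0 < η) (t : ℝ)
include hη

lemma integrable_oscFun (A : MvPolynomial ι ℝ) (b : ℕ) :
    Integrable (oscFun G η t A b) (gaussPi ι) := by
  refine .mono' ((integrable_eval_gaussPi A).norm.mul_const (η⁻¹ ^ b)) ?_ (ae_of_all _ fun x => ?_)
  · exact ((continuous_phase G t).mul (Complex.continuous_ofReal.comp
      ((MvPolynomial.continuous_eval A).mul
        ((continuous_regInv G hη).pow b)))).aestronglyMeasurable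
  · have := regInv_pos G hη x
    rw [oscFun, norm_mul, norm_phase, one_mul, Complex.norm_real, norm_mul,
      Real.norm_of_nonneg (pow_nonneg this.le _)]
    gcongr
    exact regInv_le G hη x

lemma oscInt_add (A B : MvPolynomial ι ℝ) (b : ℕ) :
    oscInt G η t (A + B) b = oscInt G η t A b + oscInt G η t B b := by
  rw [oscInt, oscInt, oscInt,
    ← integral_add (integrable_oscFun G hη t A b) (integrable_oscFun G hη t B b)]
  congr 1 with x
  simp only [oscFun, map_add]; push_cast; ring

lemma oscInt_sum (A : ι → MvPolynomial ι ℝ) (b : ℕ) :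
    oscInt G η t (∑ i, A i) b = ∑ i, oscInt G η t (A i) b := by
  simp only [oscInt]
  rw [← integral_finsetSum _ fun i _ => integrable_oscFun G hη t (A i) b]
  congr 1 with x
  simp only [oscFun, map_sum, Finset.sum_mul]
  push_cast
  rw [Finset.mul_sum]

lemma hasDerivAt_oscFun_update [DecidableEq ι] (A : MvPolynomial ι ℝ) (b : ℕ) (i : ι)
    (x : ι → ℝ) (s : ℝ) :
    HasDerivAt (fun s => oscFun G η t A b (Function.update x i s))
      (Complex.I * t * oscFun G η t (pderiv i G * A) b (Function.update x i s) +
        oscFun G η t (pderiv i A) b (Function.update x i s) -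
        b * oscFun G η t (A * pderiv i Γ[G, G]) (b + 1) (Function.update x i s)) s := by
  have phase_deriv := (((hasDerivAt_eval_update G x i s).const_mul t).ofReal_comp.mul_const
    Complex.I).cexp
  have ne_zero : eval (Function.update x i s) Γ[G, G] + η ≠ 0 := by
    rw [eval_carreDuChamp_self]; exact (sqField_add_pos G hη _).ne'
  have inv_deriv := (((hasDerivAt_eval_update Γ[G, G] x i s).add_const η).inv ne_zero).pow b
  have total := phase_deriv.mul ((hasDerivAt_eval_update A x i s).mul inv_deriv).ofReal_comp
  simp only [oscFun, phase, regInv, ← eval_carreDuChamp_self, map_mul]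
  refine total.congr_deriv ?_
  simp only [Pi.inv_apply, Pi.pow_apply, Pi.mul_apply, div_eq_mul_inv, ← inv_pow]
  generalize (eval (Function.update x i s) Γ[G, G] + η)⁻¹ = r
  rcases b with _ | b
  · simp; ring
  · push_cast [Nat.add_sub_cancel]
    ring

lemma oscInt_coord_mul (A : MvPolynomial ι ℝ) (b : ℕ) (i : ι) :
    oscInt G η t (X i * A) b = Complex.I * t * oscInt G η t (pderiv i G * A) b +
      oscInt G η t (pderiv i A) b - b * oscInt G η t (A * pderiv i Γ[G, G]) (b + 1) := by
  classical
  have int₁ := (integrable_oscFun G hη t (pderiv i G * A) b).const_mul (Complex.I * t)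
  have int₂ := integrable_oscFun G hη t (pderiv i A) b
  have int₃ := (integrable_oscFun G hη t (A * pderiv i Γ[G, G]) (b + 1)).const_mul (b : ℂ)
  have coord : ∀ x, oscFun G η t (X i * A) b x = x i • oscFun G η t A b x := fun x => by
    simp only [oscFun, map_mul, eval_X, Complex.real_smul]; push_cast; ring
  simp only [oscInt]
  rw [← integral_const_mul, ← integral_const_mul, ← integral_add' int₁ int₂,
    ← integral_sub' (int₁.add int₂) int₃, integral_congr_ae (ae_of_all _ coord)]
  exact integral_coord_smul_gaussPi i (hasDerivAt_oscFun_update G hη t A b i)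
    (integrable_oscFun G hη t A b) ((int₁.add int₂).sub int₃)
    ((integrable_oscFun G hη t (X i * A) b).congr (ae_of_all _ coord))

end OscInt

lemma IsOUEigen.oscInt_carreDuChamp_mul {k : ℕ} {G : MvPolynomial ι ℝ} (hG : IsOUEigen k G)
    {η : ℝ} (hη : 0 < η) (t : ℝ) (A : MvPolynomial ι ℝ) (b : ℕ) :
    Complex.I * t * oscInt G η t (Γ[G, G] * A) b = k * oscInt G η t (G * A) b -
      oscInt G η t Γ[G, A] b + b * oscInt G η t (A * Γ[G, Γ[G, G]]) (b + 1) := by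
  have parts := Finset.sum_congr rfl fun i (_ : i ∈ Finset.univ) =>
    oscInt_coord_mul G hη t (pderiv i G * A) b i
  rw [Finset.sum_sub_distrib, Finset.sum_add_distrib, ← Finset.mul_sum, ← Finset.mul_sum,
    ← oscInt_sum G hη, ← oscInt_sum G hη, ← oscInt_sum G hη, ← oscInt_sum G hη] at parts
  have square : ∑ i, pderiv i G * (pderiv i G * A) = Γ[G, G] * A := by
    simp only [carreDuChamp_apply, Finset.sum_mul, mul_assoc]
  have divergence : ∑ i, pderiv i (pderiv i G * A) = Γ[G, A] + ∑ i, pderiv i (pderiv i G) * A := by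
    simp only [carreDuChamp_apply, Derivation.leibniz, smul_eq_mul, ← Finset.sum_add_distrib,
      mul_comm A]
  have third : ∑ i, pderiv i G * A * pderiv i Γ[G, G] = A * Γ[G, Γ[G, G]] := by
    rw [carreDuChamp_apply G Γ[G, G], Finset.mul_sum]
    exact Finset.sum_congr rfl fun i _ => by ring
  have position : ∑ i, X i * (pderiv i G * A) =
      ∑ i, pderiv i (pderiv i G) * A + C (k : ℝ) * (G * A) := by
    have eigen := hG.ouOp_eq
    rw [ouOp_apply, Finset.sum_sub_distrib, C_neg] at eigen
    simp only [← mul_assoc, ← Finset.sum_mul]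
    linear_combination (-A) * eigen
  rw [square, divergence, third, position, oscInt_add G hη, oscInt_add G hη, oscInt_C_mul] at parts
  push_cast at parts
  linear_combination -parts

lemma totalDegree_carreDuChamp_le (P Q : MvPolynomial ι ℝ) :
    Γ[P, Q].totalDegree ≤ P.totalDegree + Q.totalDegree := by
  rw [carreDuChamp_apply]
  refine totalDegree_finsetSum_le fun i _ => (totalDegree_mul _ _).trans ?_
  exact add_le_add ((totalDegree_pderiv_le i P).trans tsub_le_self)
    ((totalDegree_pderiv_le i Q).trans tsub_le_self)

lemma eval_carreDuChamp_sq_le (P Q : MvPolynomial ι ℝ) (x : ι → ℝ) :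
    eval x Γ[P, Q] ^ 2 ≤ sqField P x * sqField Q x := by
  simp only [carreDuChamp_apply, map_sum, map_mul, sqField]
  exact Finset.sum_mul_sq_le_sq_mul_sq _ _ _

/-- A polynomial of degree at most `D` whose Gaussian second moment is at most `L`. Products and
square fields of such polynomials are again such, with constants independent of the dimension. -/
structure L2Bounded (D : ℕ) (L : ℝ) (P : MvPolynomial ι ℝ) : Prop where
  totalDegree_le : P.totalDegree ≤ D
  gaussExp_sq_le : 𝐄 (P ^ 2) ≤ L

lemma gaussExp_le_of_two_mul_le {P Q R : MvPolynomial ι ℝ}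
    (h : ∀ x, 2 * eval x P ≤ eval x Q + eval x R) : 2 * 𝐄 P ≤ 𝐄 Q + 𝐄 R := by
  rw [← gaussExp_C_mul, ← map_add]
  exact gaussExp_mono fun x => by simpa using h x

lemma exists_l2Bounded_mul (D E : ℕ) (L M : ℝ) : ∃ B, ∀ {ι : Type} [Fintype ι]
    {P Q : MvPolynomial ι ℝ}, L2Bounded D L P → L2Bounded E M Q → L2Bounded (D + E) B (P * Q) := by
  refine ⟨(hyperConst D * L ^ 2 + hyperConst E * M ^ 2) / 2, fun {ι} _ {P Q} hP hQ =>
    ⟨(totalDegree_mul _ _).trans (add_le_add hP.1 hQ.1), ?_⟩⟩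
  have young : 2 * 𝐄 ((P * Q) ^ 2) ≤ 𝐄 (P ^ 4) + 𝐄 (Q ^ 4) :=
    gaussExp_le_of_two_mul_le fun x => by
      simp only [map_mul, map_pow]
      nlinarith [sq_nonneg (eval x P ^ 2 - eval x Q ^ 2)]
  have boundP : 𝐄 (P ^ 4) ≤ hyperConst D * L ^ 2 := (gaussExp_pow_four_le hP.1).trans <|
    mul_le_mul_of_nonneg_left (pow_le_pow_left₀ (gaussExp_sq_nonneg P) hP.2 2) (hyperConst_nonneg D)
  have boundQ : 𝐄 (Q ^ 4) ≤ hyperConst E * M ^ 2 := (gaussExp_pow_four_le hQ.1).trans <|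
    mul_le_mul_of_nonneg_left (pow_le_pow_left₀ (gaussExp_sq_nonneg Q) hQ.2 2) (hyperConst_nonneg E)
  linarith

lemma L2Bounded.gaussExp_carreDuChamp_self_sq_le {D : ℕ} {L : ℝ} {P : MvPolynomial ι ℝ}
    (hP : L2Bounded D L P) : 𝐄 (Γ[P, P] ^ 2) ≤ hyperConst D * (D * L) ^ 2 := by
  refine (_root_.gaussExp_carreDuChamp_self_sq_le hP.1).trans ?_
  have := gaussExp_sq_nonneg P
  gcongr
  · exact hyperConst_nonneg D
  · exact hP.2

lemma exists_l2Bounded_carreDuChamp (D E : ℕ) (L M : ℝ) : ∃ B, ∀ {ι : Type} [Fintype ι]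
    {P Q : MvPolynomial ι ℝ}, L2Bounded D L P → L2Bounded E M Q → L2Bounded (D + E) B Γ[P, Q] := by
  refine ⟨(hyperConst D * (D * L) ^ 2 + hyperConst E * (E * M) ^ 2) / 2, fun {ι} _ {P Q} hP hQ =>
    ⟨(totalDegree_carreDuChamp_le P Q).trans (add_le_add hP.1 hQ.1), ?_⟩⟩
  have young : 2 * 𝐄 (Γ[P, Q] ^ 2) ≤ 𝐄 (Γ[P, P] ^ 2) + 𝐄 (Γ[Q, Q] ^ 2) :=
    gaussExp_le_of_two_mul_le fun x => by
      simp only [map_pow, eval_carreDuChamp_self]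
      nlinarith [sq_nonneg (sqField P x - sqField Q x), eval_carreDuChamp_sq_le P Q x]
  linarith [hP.gaussExp_carreDuChamp_self_sq_le, hQ.gaussExp_carreDuChamp_self_sq_le]

lemma pow_le_one_add_pow {r : ℝ} (hr : 0 ≤ r) {a b : ℕ} (hab : a ≤ b) : r ^ a ≤ 1 + r ^ b := by
  rcases le_total r 1 with h | h
  · linarith [pow_le_one₀ hr h (n := a), pow_nonneg hr b]
  · linarith [pow_le_pow_right₀ h hab]

lemma abs_mul_pow_le {r : ℝ} (hr : 0 ≤ r) (y : ℝ) {a n : ℕ} (han : a ≤ n) :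
    |y * r ^ a| ≤ y ^ 2 + (1 + r ^ (2 * n)) := by
  have young : |y| * r ^ a ≤ |y| ^ 2 + (r ^ a) ^ 2 := by
    nlinarith [sq_nonneg (|y| - r ^ a), sq_nonneg |y|, sq_nonneg (r ^ a)]
  rw [abs_mul, abs_of_nonneg (pow_nonneg hr a)]
  rw [sq_abs, ← pow_mul, mul_comm a] at young
  linarith [pow_le_one_add_pow hr (Nat.mul_le_mul_left 2 han)]

lemma norm_oscFun_le (G : MvPolynomial ι ℝ) {η : ℝ} (hη : 0 < η) (t : ℝ) (B : MvPolynomial ι ℝ)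
    {n j b : ℕ} (hjb : j ≤ b) (hb : b ≤ j + n) (x : ι → ℝ) :
    ‖oscFun G η t (Γ[G, G] ^ j * B) b x‖ ≤ eval x (B ^ 2) + (1 + regInv G η x ^ (2 * n)) := by
  obtain ⟨a, rfl⟩ := Nat.exists_eq_add_of_le hjb
  have nonneg := sqField_mul_regInv_nonneg G hη x
  calc ‖oscFun G η t (Γ[G, G] ^ j * B) (j + a) x‖
      = (sqField G x * regInv G η x) ^ j * |eval x B * regInv G η x ^ a| := by
        rw [oscFun, norm_mul, norm_phase, one_mul, Complex.norm_real, Real.norm_eq_abs,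
          ← abs_of_nonneg (pow_nonneg nonneg j), ← abs_mul, map_mul, map_pow,
          eval_carreDuChamp_self]
        ring_nf
    _ ≤ 1 * |eval x B * regInv G η x ^ a| := by
        gcongr
        exact pow_le_one₀ nonneg (sqField_mul_regInv_le_one G hη x)
    _ ≤ eval x (B ^ 2) + (1 + regInv G η x ^ (2 * n)) := by
        rw [one_mul, map_pow]
        exact abs_mul_pow_le (regInv_pos G hη x).le _ (Nat.add_le_add_iff_left.mp hb)

lemma norm_oscInt_le (G : MvPolynomial ι ℝ) {η : ℝ} (hη : 0 < η) (t : ℝ) (B : MvPolynomial ι ℝ)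
    {n j b : ℕ} (hjb : j ≤ b) (hb : b ≤ j + n) :
    ‖oscInt G η t (Γ[G, G] ^ j * B) b‖ ≤
      𝐄 (B ^ 2) + (1 + ∫ x, regInv G η x ^ (2 * n) ∂gaussPi ι) := by
  have intB := integrable_eval_gaussPi (B ^ 2)
  have intR := (integrable_const (1 : ℝ)).add (integrable_regInv_pow G hη (2 * n))
  refine (norm_integral_le_of_norm_le (intB.add intR)
    (ae_of_all _ (norm_oscFun_le G hη t B hjb hb))).trans_eq ?_
  rw [integral_add' intB intR, integral_add' (integrable_const 1) (integrable_regInv_pow G hη _),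
    gaussExp_apply]
  simp

lemma carreDuChamp_pow_succ (P Q : MvPolynomial ι ℝ) (n : ℕ) :
    Γ[P, Q ^ (n + 1)] = C ((n : ℝ) + 1) * (Q ^ n * Γ[P, Q]) := by
  rw [Derivation.leibniz_pow]
  simp [smul_eq_mul, nsmul_eq_mul]

lemma IsOUEigen.abs_mul_norm_oscInt_le {k : ℕ} {G : MvPolynomial ι ℝ} (hG : IsOUEigen k G) {η : ℝ}
    (hη : 0 < η) (t : ℝ) (B : MvPolynomial ι ℝ) (j b : ℕ) :
    |t| * ‖oscInt G η t (Γ[G, G] ^ (j + 2) * B) b‖ ≤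
      k * ‖oscInt G η t (Γ[G, G] ^ (j + 1) * (G * B)) b‖ +
      ‖oscInt G η t (Γ[G, G] ^ (j + 1) * Γ[G, B]) b‖ +
      (j + 1) * ‖oscInt G η t (Γ[G, G] ^ j * (B * Γ[G, Γ[G, G]])) b‖ +
      b * ‖oscInt G η t (Γ[G, G] ^ (j + 1) * (B * Γ[G, Γ[G, G]])) (b + 1)‖ := by
  have parts := hG.oscInt_carreDuChamp_mul hη t (Γ[G, G] ^ (j + 1) * B) b
  rw [show Γ[G, G] * (Γ[G, G] ^ (j + 1) * B) = Γ[G, G] ^ (j + 2) * B by ring,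
    show G * (Γ[G, G] ^ (j + 1) * B) = Γ[G, G] ^ (j + 1) * (G * B) by ring,
    show Γ[G, Γ[G, G] ^ (j + 1) * B] = Γ[G, G] ^ (j + 1) * Γ[G, B] +
        C ((j : ℝ) + 1) * (Γ[G, G] ^ j * (B * Γ[G, Γ[G, G]])) by
      rw [carreDuChamp_mul, carreDuChamp_pow_succ]; ring,
    mul_assoc (Γ[G, G] ^ (j + 1)), oscInt_add G hη, oscInt_C_mul] at parts
  have norm_lhs : ‖Complex.I * t * oscInt G η t (Γ[G, G] ^ (j + 2) * B) b‖ =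
      |t| * ‖oscInt G η t (Γ[G, G] ^ (j + 2) * B) b‖ := by simp
  have norm_coeff : ‖((j + 1 : ℝ) : ℂ)‖ = j + 1 := by
    rw [Complex.norm_real, Real.norm_of_nonneg (by positivity)]
  rw [← norm_lhs, parts]
  refine (norm_add_le _ _).trans (add_le_add ((norm_sub_le _ _).trans ?_) (by simp))
  rw [add_assoc]
  refine add_le_add (by simp) ((norm_add_le _ _).trans (add_le_add le_rfl ?_))
  rw [norm_mul, norm_coeff]

lemma exists_pow_mul_norm_oscInt_le (k : ℕ) (V M : ℝ) (n q : ℕ) {D : ℕ} {L : ℝ} {j b : ℕ}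
    (hqj : 2 * q ≤ j) (hjb : j ≤ b) (hb : b + 2 * q ≤ j + n) :
    ∃ K : ℝ, ∀ (ι : Type) [Fintype ι] (G : MvPolynomial ι ℝ) (η t : ℝ),
      IsOUEigen k G → 𝐄 (G ^ 2) ≤ V → 0 < η → ∫ x, regInv G η x ^ (2 * n) ∂gaussPi ι ≤ M →
      ∀ B : MvPolynomial ι ℝ, L2Bounded D L B →
        |t| ^ q * ‖oscInt G η t (Γ[G, G] ^ j * B) b‖ ≤ K := by
  induction q generalizing D L j b with
  | zero =>
    refine ⟨L + (1 + M), fun ι _ G η t _ _ hη hM B hB => ?_⟩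
    rw [pow_zero, one_mul]
    linarith [norm_oscInt_le G hη t B hjb (by omega : b ≤ j + n), hB.gaussExp_sq_le]
  | succ q ih =>
    obtain ⟨j, rfl⟩ : ∃ i, j = i + 2 := ⟨j - 2, by omega⟩
    obtain ⟨L₁, mulG⟩ := exists_l2Bounded_mul k D V L
    obtain ⟨L₂, gammaG⟩ := exists_l2Bounded_carreDuChamp k D V L
    obtain ⟨L₃, gammaGG⟩ := exists_l2Bounded_carreDuChamp k k V V
    obtain ⟨L₄, gammaGGG⟩ := exists_l2Bounded_carreDuChamp k (k + k) V L₃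
    obtain ⟨L₅, mulGGG⟩ := exists_l2Bounded_mul D (k + (k + k)) L L₄
    obtain ⟨K₁, hK₁⟩ := ih (D := k + D) (L := L₁) (j := j + 1) (b := b)
      (by omega) (by omega) (by omega)
    obtain ⟨K₂, hK₂⟩ := ih (D := k + D) (L := L₂) (j := j + 1) (b := b)
      (by omega) (by omega) (by omega)
    obtain ⟨K₃, hK₃⟩ := ih (D := D + (k + (k + k))) (L := L₅) (j := j) (b := b)
      (by omega) (by omega) (by omega)
    obtain ⟨K₄, hK₄⟩ := ih (D := D + (k + (k + k))) (L := L₅) (j := j + 1) (b := b + 1)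
      (by omega) (by omega) (by omega)
    refine ⟨k * K₁ + K₂ + (j + 1) * K₃ + b * K₄, fun ι _ G η t hG hV hη hM B hB => ?_⟩
    have hGV : L2Bounded k V G := ⟨hG.totalDegree_le, hV⟩
    have hBG := mulGGG hB (gammaGGG hGV (gammaGG hGV hGV))
    have bound₁ := hK₁ ι G η t hG hV hη hM _ (mulG hGV hB)
    have bound₂ := hK₂ ι G η t hG hV hη hM _ (gammaG hGV hB)
    have bound₃ := hK₃ ι G η t hG hV hη hM _ hBG
    have bound₄ := hK₄ ι G η t hG hV hη hM _ hBG
    rw [pow_succ, mul_assoc]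
    refine (mul_le_mul_of_nonneg_left (hG.abs_mul_norm_oscInt_le hη t B j b)
      (by positivity)).trans ?_
    simp only [mul_add, mul_left_comm (|t| ^ q)]
    gcongr

lemma norm_integral_phase_sub_oscInt_le (G : MvPolynomial ι ℝ) {η : ℝ} (hη : 0 < η) (t : ℝ)
    (n : ℕ) : ‖∫ x, phase G t x ∂gaussPi ι - oscInt G η t (Γ[G, G] ^ n * 1) n‖ ≤
      η * n * (1 + ∫ x, regInv G η x ^ (2 * n) ∂gaussPi ι) := by
  have intR := integrable_regInv_pow G hη (2 * n)
  have pointwise : ∀ x, ‖phase G t x - oscFun G η t (Γ[G, G] ^ n * 1) n x‖ ≤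
      η * n * (1 + regInv G η x ^ (2 * n)) := fun x => by
    have factor : phase G t x - oscFun G η t (Γ[G, G] ^ n * 1) n x =
        phase G t x * ((1 - (1 - η * regInv G η x) ^ n : ℝ) : ℂ) := by
      rw [← sqField_mul_regInv G hη, oscFun, mul_one, map_pow, eval_carreDuChamp_self]
      push_cast; ring
    have nonneg := sqField_mul_regInv_nonneg G hη x
    have le_one := sqField_mul_regInv_le_one G hη x
    rw [sqField_mul_regInv G hη] at nonneg le_one
    have bernoulli := one_add_mul_le_pow (a := -(η * regInv G η x)) (by linarith) n
    rw [← sub_eq_add_neg] at bernoulli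
    rw [factor, norm_mul, norm_phase, one_mul, Complex.norm_real,
      Real.norm_of_nonneg (sub_nonneg.mpr (pow_le_one₀ nonneg le_one))]
    rcases n.eq_zero_or_pos with rfl | hn
    · simp
    · have power := pow_le_one_add_pow (regInv_pos G hη x).le (by omega : 1 ≤ 2 * n)
      have := mul_le_mul_of_nonneg_left power (by positivity : 0 ≤ η * n)
      linarith
  rw [oscInt, ← integral_sub (integrable_phase G t) (integrable_oscFun G hη t _ _)]
  refine (norm_integral_le_of_norm_le (((integrable_const 1).add intR).const_mul _)
    (ae_of_all _ pointwise)).trans_eq ?_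
  simp only [Pi.add_apply]
  rw [integral_const_mul, integral_add (integrable_const 1) intR]
  simp

lemma exists_pow_mul_norm_integral_phase_le (k : ℕ) (V M : ℝ) (q : ℕ) :
    ∃ K : ℝ, ∀ (ι : Type) [Fintype ι] (G : MvPolynomial ι ℝ), IsOUEigen k G → 𝐄 (G ^ 2) ≤ V →
      (∀ η, 0 < η → ∫ x, regInv G η x ^ (4 * q) ∂gaussPi ι ≤ M) →
      ∀ t : ℝ, |t| ^ q * ‖∫ x, phase G t x ∂gaussPi ι‖ ≤ K := by
  obtain ⟨K, hK⟩ := exists_pow_mul_norm_oscInt_le k V M (2 * q) q (D := 0) (L := 1)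
    le_rfl le_rfl le_rfl
  refine ⟨K, fun ι _ G hG hV hM t => ?_⟩
  simp only [show 4 * q = 2 * (2 * q) by ring] at hM
  have one_bounded : L2Bounded 0 1 (1 : MvPolynomial ι ℝ) :=
    ⟨by simp, by rw [one_pow, ← C_1, gaussExp_C]⟩
  have regularised : ∀ η : ℝ, 0 < η → |t| ^ q * ‖∫ x, phase G t x ∂gaussPi ι‖ ≤
      K + |t| ^ q * (η * (2 * q : ℕ) * (1 + M)) := fun η hη => by
    have decay := hK ι G η t hG hV hη (hM η hη) 1 one_bounded
    have error := (norm_sub_norm_le _ _).trans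
      (norm_integral_phase_sub_oscInt_le G hη t (2 * q))
    have moment : η * (2 * q : ℕ) * (1 + ∫ x, regInv G η x ^ (2 * (2 * q)) ∂gaussPi ι) ≤
        η * (2 * q : ℕ) * (1 + M) := by gcongr; exact hM η hη
    have := mul_le_mul_of_nonneg_left (error.trans moment) (by positivity : 0 ≤ |t| ^ q)
    linarith
  have limit : Tendsto (fun η : ℝ => K + |t| ^ q * (η * (2 * q : ℕ) * (1 + M))) (𝓝[>] 0) (𝓝 K) := by
    have : Continuous fun η : ℝ => K + |t| ^ q * (η * (2 * q : ℕ) * (1 + M)) := by fun_prop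
    simpa using (this.tendsto 0).mono_left nhdsWithin_le_nhds
  refine ge_of_tendsto limit ?_
  filter_upwards [self_mem_nhdsWithin] with η hη using regularised η hη

end FourierDecay

section LaplaceFourier

variable {κ : Type} [Fintype κ]

lemma gaussianPDFReal_le_half (x : ℝ) : gaussianPDFReal 0 1 x ≤ 1 / 2 := by
  have two_le : (2 : ℝ) ≤ √(2 * Real.pi * (1 : NNReal)) := by
    apply Real.le_sqrt_of_sq_le
    rw [NNReal.coe_one]
    linarith [Real.pi_gt_three]
  have exp_le : Real.exp (-(x - 0) ^ 2 / (2 * (1 : NNReal))) ≤ 1 :=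
    Real.exp_le_one_iff.mpr
      (div_nonpos_of_nonpos_of_nonneg (neg_nonpos.mpr (sq_nonneg _)) (by positivity))
  calc gaussianPDFReal 0 1 x ≤ 1 / 2 * 1 :=
        mul_le_mul (by rw [one_div]; exact inv_anti₀ two_pos two_le) exp_le (Real.exp_pos _).le
          (by norm_num)
    _ = 1 / 2 := mul_one _

lemma gaussianReal_Icc_le (r : ℝ) : gaussianReal 0 1 (Set.Icc (-r) r) ≤ ENNReal.ofReal r := by
  rw [gaussianReal_apply 0 one_ne_zero]
  calc ∫⁻ x in Set.Icc (-r) r, gaussianPDF 0 1 x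
      ≤ ∫⁻ _ in Set.Icc (-r) r, ENNReal.ofReal (1 / 2) :=
        lintegral_mono fun x => ENNReal.ofReal_le_ofReal (gaussianPDFReal_le_half x)
    _ = ENNReal.ofReal r := by
        rw [setLIntegral_const, Real.volume_Icc, ← ENNReal.ofReal_mul (by norm_num)]
        ring_nf

lemma measureReal_gaussPi_cube_le {r : ℝ} (hr : 0 ≤ r) :
    (gaussPi κ).real (Set.univ.pi fun _ => Set.Icc (-r) r) ≤ r ^ Fintype.card κ := by
  rw [Measure.real, gaussPi, Measure.pi_pi]
  refine ENNReal.toReal_le_of_le_ofReal (by positivity) ?_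
  exact (Finset.prod_le_prod' fun _ _ => gaussianReal_Icc_le r).trans_eq
    (by simp [ENNReal.ofReal_pow hr])

lemma integral_cexp_sum_mul_gaussPi (v : κ → ℝ) :
    ∫ τ, Complex.exp ((∑ j, τ j * v j : ℝ) * Complex.I) ∂gaussPi κ =
      ((Real.exp (-(∑ j, v j ^ 2) / 2) : ℝ) : ℂ) := by
  have factor : ∀ τ : κ → ℝ, Complex.exp ((∑ j, τ j * v j : ℝ) * Complex.I) =
      ∏ j, Complex.exp (v j * τ j * Complex.I) := fun τ => by
    rw [← Complex.exp_sum]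
    push_cast
    simp only [Finset.sum_mul, mul_comm (τ _ : ℂ)]
  simp only [factor]
  rw [gaussPi, integral_fintype_prod_eq_prod
    (f := fun j (s : ℝ) => Complex.exp (v j * s * Complex.I))]
  simp only [← charFun_apply_real, charFun_gaussianReal]
  rw [← Complex.exp_sum, Complex.ofReal_exp]
  push_cast
  simp [Finset.sum_div, neg_div]

variable {Ω : Type*} [MeasurableSpace Ω] {μ : Measure Ω} {g : Ω → κ → ℝ}

lemma abs_pow_mul_norm_integral_cexp_le {Q : ℕ} {K : ℝ}
    (decay : ∀ u : κ → ℝ, ∑ j, u j ^ 2 = 1 → ∀ t : ℝ,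
      |t| ^ Q * ‖∫ ω, Complex.exp ((t * ∑ j, u j * g ω j : ℝ) * Complex.I) ∂μ‖ ≤ K)
    {v : κ → ℝ} {j : κ} (hv : v j ≠ 0) :
    |v j| ^ Q * ‖∫ ω, Complex.exp ((∑ j, v j * g ω j : ℝ) * Complex.I) ∂μ‖ ≤ K := by
  set ρ := √(∑ j, v j ^ 2)
  have coord_le : v j ^ 2 ≤ ∑ j, v j ^ 2 :=
    Finset.single_le_sum (f := fun j => v j ^ 2) (fun _ _ => sq_nonneg _) (Finset.mem_univ j)
  have abs_le : |v j| ≤ ρ := Real.abs_le_sqrt coord_le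
  have pos : 0 < ρ := (abs_pos.mpr hv).trans_le abs_le
  have unit : ∑ j, (v j / ρ) ^ 2 = 1 := by
    simp only [div_pow]
    rw [← Finset.sum_div, Real.sq_sqrt (Finset.sum_nonneg fun _ _ => sq_nonneg _)]
    exact div_self ((sq_pos_of_ne_zero hv).trans_le coord_le).ne'
  have rescale : ∀ ω, ρ * ∑ j, v j / ρ * g ω j = ∑ j, v j * g ω j := fun ω => by
    rw [Finset.mul_sum]
    exact Finset.sum_congr rfl fun j _ => by field_simp
  have bound := decay _ unit ρ
  simp only [rescale, abs_of_pos pos] at bound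
  refine le_trans ?_ bound
  gcongr

variable [IsProbabilityMeasure μ]

lemma norm_integral_cexp_le_one (f : Ω → ℝ) :
    ‖∫ ω, Complex.exp (f ω * Complex.I) ∂μ‖ ≤ 1 :=
  (norm_integral_le_of_norm_le (integrable_const 1)
    (ae_of_all _ fun ω => (Complex.norm_exp_ofReal_mul_I (f ω)).le)).trans_eq (by simp)

lemma integral_exp_neg_sum_sq_eq (hg : Measurable g) (a : ℝ) :
    ((∫ ω, Real.exp (-(∑ j, (a * g ω j) ^ 2) / 2) ∂μ : ℝ) : ℂ) =
      ∫ τ, ∫ ω, Complex.exp ((∑ j, a * τ j * g ω j : ℝ) * Complex.I) ∂μ ∂gaussPi κ := by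
  have meas : Measurable fun z : Ω × (κ → ℝ) =>
      Complex.exp ((∑ j, a * z.2 j * g z.1 j : ℝ) * Complex.I) := by fun_prop
  have int := Integrable.mono' (integrable_const (1 : ℝ)) meas.aestronglyMeasurable
    (ae_of_all (μ.prod (gaussPi κ)) fun z => (Complex.norm_exp_ofReal_mul_I _).le)
  rw [← integral_integral_swap int, ← integral_complex_ofReal]
  congr 1 with ω
  rw [← integral_cexp_sum_mul_gaussPi]
  simp only [mul_assoc, mul_left_comm a]

/- The Laplace transform of `∑ j, g j ^ 2` is the Gaussian average of the characteristic function
of `g`; the average over a small cube is bounded trivially, the rest by the assumed decay. -/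
lemma integral_exp_neg_sum_sq_le (hg : Measurable g) {Q : ℕ} {K : ℝ} (hK : 0 ≤ K)
    (decay : ∀ u : κ → ℝ, ∑ j, u j ^ 2 = 1 → ∀ t : ℝ,
      |t| ^ Q * ‖∫ ω, Complex.exp ((t * ∑ j, u j * g ω j : ℝ) * Complex.I) ∂μ‖ ≤ K)
    {σ : ℝ} (hσ : 0 < σ) :
    ∫ ω, Real.exp (-(∑ j, (σ ^ 2 * g ω j) ^ 2) / 2) ∂μ ≤
      σ⁻¹ ^ Fintype.card κ + K * σ⁻¹ ^ Q := by
  set B : Set (κ → ℝ) := Set.univ.pi fun _ => Set.Icc (-σ⁻¹) σ⁻¹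
  have measB : MeasurableSet B := .univ_pi fun _ => measurableSet_Icc
  have pointwise : ∀ τ, ‖∫ ω, Complex.exp ((∑ j, σ ^ 2 * τ j * g ω j : ℝ) * Complex.I) ∂μ‖ ≤
      B.indicator (fun _ => (1 : ℝ)) τ + K * σ⁻¹ ^ Q := fun τ => by
    by_cases hτ : τ ∈ B
    · rw [Set.indicator_of_mem hτ]
      exact (norm_integral_cexp_le_one _).trans (le_add_of_nonneg_right (by positivity))
    · obtain ⟨j, hj⟩ : ∃ j, σ⁻¹ < |τ j| := by
        by_contra! inside
        exact hτ fun j _ => abs_le.mp (inside j)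
      have le_abs : σ ≤ |σ ^ 2 * τ j| := by
        rw [abs_mul, abs_of_pos (by positivity)]
        calc σ = σ ^ 2 * σ⁻¹ := by field_simp
          _ ≤ σ ^ 2 * |τ j| := by gcongr
      have far := abs_pow_mul_norm_integral_cexp_le decay (v := fun j => σ ^ 2 * τ j)
        (abs_pos.mp (hσ.trans_le le_abs))
      rw [Set.indicator_of_notMem hτ, zero_add, inv_pow, ← div_eq_mul_inv,
        le_div_iff₀ (by positivity), mul_comm]
      exact (mul_le_mul_of_nonneg_right (pow_le_pow_left₀ hσ.le le_abs Q)
        (norm_nonneg _)).trans far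
  have intB : Integrable (B.indicator fun _ => (1 : ℝ)) (gaussPi κ) :=
    (integrable_const 1).indicator measB
  have average := norm_integral_le_of_norm_le (intB.add (integrable_const (K * σ⁻¹ ^ Q)))
    (ae_of_all _ pointwise)
  rw [← integral_exp_neg_sum_sq_eq hg, Complex.norm_real, integral_add' intB (integrable_const _),
    integral_indicator_const _ measB, integral_const, probReal_univ, smul_eq_mul, mul_one,
    one_smul] at average
  exact (Real.le_norm_self _).trans (average.trans
    (add_le_add_left (measureReal_gaussPi_cube_le (inv_nonneg.mpr hσ.le)) _))

end LaplaceFourier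

section RandomisedLaplace

lemma exp_neg_two_mul_integral_le {Ω : Type*} [MeasurableSpace Ω] {μ : Measure Ω}
    [IsProbabilityMeasure μ] {Y : Ω → ℝ} (hY : Integrable Y μ) (hY0 : ∀ ω, 0 ≤ Y ω) {A : Set Ω}
    (hA : 3 / 4 ≤ μ.real A) :
    Real.exp (-(2 * ∫ ω, Y ω ∂μ)) ≤ 2 * ∫ ω in A, Real.exp (-Y ω) ∂μ := by
  set a := ∫ ω, Y ω ∂μ
  have nonneg : 0 ≤ a := integral_nonneg hY0
  have tangent : ∀ ω, Real.exp (-(2 * a)) * (1 + 2 * a - Y ω) ≤ Real.exp (-Y ω) := fun ω => by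
    rw [show -Y ω = -(2 * a) + (2 * a - Y ω) by ring, Real.exp_add]
    gcongr
    linarith [Real.add_one_le_exp (2 * a - Y ω)]
  have intExp : Integrable (fun ω => Real.exp (-Y ω)) μ :=
    .mono' (integrable_const 1) (Real.continuous_exp.comp_aestronglyMeasurable hY.1.neg)
      (ae_of_all _ fun ω => by
        rw [Real.norm_of_nonneg (Real.exp_pos _).le]
        exact Real.exp_le_one_iff.mpr (neg_nonpos.mpr (hY0 ω)))
  have intConst : IntegrableOn (fun _ => 1 + 2 * a) A μ := integrableOn_const
  have lower :=
    integral_mono ((intConst.sub hY.integrableOn).const_mul _) intExp.integrableOn tangent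
  rw [integral_const_mul, integral_sub' intConst hY.integrableOn, setIntegral_const,
    smul_eq_mul] at lower
  have onA : ∫ ω in A, Y ω ∂μ ≤ a := setIntegral_le_integral hY (ae_of_all _ hY0)
  have half : 1 / 2 ≤ μ.real A * (1 + 2 * a) - ∫ ω in A, Y ω ∂μ := by nlinarith
  have := mul_le_mul_of_nonneg_left half (Real.exp_pos (-(2 * a))).le
  linarith

variable {ι : Type} [Fintype ι]

lemma integrable_exp_neg_mul_sqField (F : MvPolynomial ι ℝ) {s : ℝ} (hs : 0 ≤ s) :
    Integrable (fun x => Real.exp (-(s * sqField F x))) (gaussPi ι) := by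
  have := continuous_sqField F
  refine .mono' (integrable_const 1) (Continuous.aestronglyMeasurable (by fun_prop))
    (ae_of_all _ fun x => ?_)
  rw [Real.norm_of_nonneg (Real.exp_pos _).le, Real.exp_le_one_iff]
  exact neg_nonpos.mpr (mul_nonneg hs (sqField_nonneg F x))

variable {κ : Type} [Fintype κ]

lemma integrable_eval_dirDeriv_sq (F : MvPolynomial ι ℝ) (x : ι → ℝ) :
    Integrable (fun h => eval x (dirDeriv h F) ^ 2) (gaussPi ι) := by
  have := integrable_eval_gaussPi (linearForm (fun i => eval x (pderiv i F)) ^ 2)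
  simp only [map_pow, eval_linearForm] at this
  simpa only [eval_dirDeriv, mul_comm] using this

lemma integrable_eval_dirDeriv_sq_gaussVectors (F : MvPolynomial ι ℝ) (x : ι → ℝ) (j : κ) :
    Integrable (fun N => eval x (dirDeriv (N j) F) ^ 2) (gaussVectors κ ι) :=
  (measurePreserving_eval_gaussVectors j).integrable_comp_of_integrable
    (integrable_eval_dirDeriv_sq F x)

lemma integral_eval_dirDeriv_sq_gaussVectors (F : MvPolynomial ι ℝ) (x : ι → ℝ) (j : κ) :
    ∫ N, eval x (dirDeriv (N j) F) ^ 2 ∂gaussVectors κ ι = sqField F x := by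
  have marginal := measurePreserving_eval_gaussVectors (ι := ι) j
  have single : ∫ h, eval x (dirDeriv h F) ^ 2 ∂gaussPi ι = sqField F x := by
    simp only [eval_dirDeriv, integral_sum_mul_sq_gaussPi, sqField]
  rwa [← marginal.map_eq, integral_map marginal.measurable.aemeasurable
    (by rw [marginal.map_eq]; exact (integrable_eval_dirDeriv_sq F x).1)] at single

lemma exp_neg_mul_sqField_le (F : MvPolynomial ι ℝ) (a : ℝ) {A : Set (κ → ι → ℝ)}
    (hA : 3 / 4 ≤ (gaussVectors κ ι).real A) (x : ι → ℝ) :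
    Real.exp (-(a ^ 2 * Fintype.card κ * sqField F x)) ≤
      2 * ∫ N in A, Real.exp (-(∑ j, (a * eval x (dirDeriv (N j) F)) ^ 2) / 2)
        ∂gaussVectors κ ι := by
  have int := integrable_finsetSum (μ := gaussVectors κ ι) Finset.univ fun j _ =>
    (integrable_eval_dirDeriv_sq_gaussVectors F x j).const_mul (a ^ 2 / 2)
  have mean : ∫ N, ∑ j, a ^ 2 / 2 * eval x (dirDeriv (N j) F) ^ 2 ∂gaussVectors κ ι =
      a ^ 2 / 2 * (Fintype.card κ * sqField F x) := by
    rw [integral_finsetSum _ fun j _ =>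
      (integrable_eval_dirDeriv_sq_gaussVectors F x j).const_mul (a ^ 2 / 2)]
    simp only [integral_const_mul, integral_eval_dirDeriv_sq_gaussVectors, Finset.sum_const,
      Finset.card_univ, nsmul_eq_mul]
    ring
  have jensen := exp_neg_two_mul_integral_le int
    (fun N => Finset.sum_nonneg fun j _ => by positivity) hA
  have scale : ∀ N : κ → ι → ℝ, -(∑ j, (a * eval x (dirDeriv (N j) F)) ^ 2) / 2 =
      -∑ j, a ^ 2 / 2 * eval x (dirDeriv (N j) F) ^ 2 := fun N => by
    rw [neg_div, Finset.sum_div]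
    exact congrArg _ (Finset.sum_congr rfl fun j _ => by ring)
  rw [mean, show 2 * (a ^ 2 / 2 * (Fintype.card κ * sqField F x)) =
    a ^ 2 * Fintype.card κ * sqField F x by ring] at jensen
  simpa only [scale] using jensen

lemma integral_exp_neg_mul_sqField_le (F : MvPolynomial ι ℝ) (a : ℝ) {A : Set (κ → ι → ℝ)}
    (hAm : MeasurableSet A) (hA : 3 / 4 ≤ (gaussVectors κ ι).real A) {b : ℝ} (hb : 0 ≤ b)
    (laplace : ∀ N ∈ A,
      ∫ x, Real.exp (-(∑ j, (a * eval x (dirDeriv (N j) F)) ^ 2) / 2) ∂gaussPi ι ≤ b) :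
    ∫ x, Real.exp (-(a ^ 2 * Fintype.card κ * sqField F x)) ∂gaussPi ι ≤ 2 * b := by
  set f : (ι → ℝ) → (κ → ι → ℝ) → ℝ := fun x N =>
    Real.exp (-(∑ j, (a * eval x (dirDeriv (N j) F)) ^ 2) / 2) with hf
  have cont : Continuous (Function.uncurry f) := by
    have : ∀ i, Continuous fun z : (ι → ℝ) × (κ → ι → ℝ) => eval z.1 (pderiv i F) := fun i =>
      (MvPolynomial.continuous_eval _).comp continuous_fst
    simp only [hf, Function.uncurry_def, eval_dirDeriv]
    fun_prop
  have int : Integrable (Function.uncurry f)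
      ((gaussPi ι).prod ((gaussVectors κ ι).restrict A)) := by
    refine .mono' (integrable_const 1) cont.aestronglyMeasurable (ae_of_all _ fun z => ?_)
    change ‖Real.exp _‖ ≤ 1
    rw [Real.norm_of_nonneg (Real.exp_pos _).le]
    refine Real.exp_le_one_iff.mpr (div_nonpos_of_nonpos_of_nonneg (neg_nonpos.mpr ?_) two_pos.le)
    exact Finset.sum_nonneg fun _ _ => sq_nonneg _
  calc ∫ x, Real.exp (-(a ^ 2 * Fintype.card κ * sqField F x)) ∂gaussPi ι
      ≤ ∫ x, 2 * ∫ N in A, f x N ∂gaussVectors κ ι ∂gaussPi ι :=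
        integral_mono (integrable_exp_neg_mul_sqField F (by positivity))
          (int.integral_prod_left.const_mul 2) (exp_neg_mul_sqField_le F a hA)
    _ = 2 * ∫ N in A, ∫ x, f x N ∂gaussPi ι ∂gaussVectors κ ι := by
        rw [integral_const_mul, integral_integral_swap int]
    _ ≤ 2 * ∫ _ in A, b ∂gaussVectors κ ι := by
        exact mul_le_mul_of_nonneg_left
          (setIntegral_mono_on int.integral_prod_right integrableOn_const hAm laplace) two_pos.le
    _ ≤ 2 * b := by
        rw [setIntegral_const, smul_eq_mul]
        gcongr
        exact mul_le_of_le_one_left hb measureReal_le_one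

end RandomisedLaplace

section NegativeMoments

/- With `n = ⌊R⌋₊` one has `n * S ≤ 1`, so the term of index `n` of the sum already dominates. -/
lemma pow_le_one_add_exp_mul_sum {R S A : ℝ} (hR : 0 ≤ R) (hRA : R ≤ A) (hS : 0 ≤ S)
    (hRS : R * S ≤ 1) (q : ℕ) :
    R ^ q ≤ 1 + Real.exp 1 *
      ∑ i ∈ Finset.range ⌊A⌋₊, (2 * (i + 1)) ^ q * Real.exp (-((i + 1) * S)) := by
  obtain small | large := lt_or_ge R 1
  · exact (pow_le_one₀ hR small.le).trans (le_add_of_nonneg_right (by positivity))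
  obtain ⟨i, hi⟩ := Nat.exists_eq_add_of_le' ((Nat.one_le_floor_iff R).mpr large)
  have floor_le : (i + 1 : ℝ) ≤ R := by exact_mod_cast hi ▸ Nat.floor_le hR
  have lt_floor : R < i + 1 + 1 := by exact_mod_cast hi ▸ Nat.lt_floor_add_one R
  have succ_le : i + 1 ≤ ⌊A⌋₊ := hi ▸ Nat.floor_mono hRA
  have one_le : 1 ≤ Real.exp 1 * Real.exp (-((i + 1) * S)) := by
    rw [← Real.exp_add]
    exact Real.one_le_exp (by linarith [mul_le_mul_of_nonneg_right floor_le hS])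
  calc R ^ q ≤ (2 * (i + 1)) ^ q * 1 := by
        rw [mul_one]
        exact pow_le_pow_left₀ hR (by linarith [i.cast_nonneg (α := ℝ)]) q
    _ ≤ (2 * (i + 1)) ^ q * (Real.exp 1 * Real.exp (-((i + 1) * S))) := by gcongr
    _ = Real.exp 1 * ((2 * (i + 1)) ^ q * Real.exp (-((i + 1) * S))) := by ring
    _ ≤ Real.exp 1 * ∑ i ∈ Finset.range ⌊A⌋₊, (2 * (i + 1)) ^ q * Real.exp (-((i + 1) * S)) := by
        gcongr
        exact Finset.single_le_sum
          (f := fun i : ℕ => (2 * (i + 1 : ℝ)) ^ q * Real.exp (-((i + 1) * S)))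
          (fun _ _ => by positivity) (Finset.mem_range.mpr succ_le)
    _ ≤ _ := le_add_of_nonneg_left zero_le_one

variable {ι : Type} [Fintype ι]

lemma integral_regInv_pow_le_of_laplace (F : MvPolynomial ι ℝ) (q : ℕ) {B : ℝ} (hB : 0 ≤ B)
    (laplace : ∀ s : ℝ, 0 < s → ∫ x, Real.exp (-(s * sqField F x)) ∂gaussPi ι ≤ B / s ^ (q + 2))
    {η : ℝ} (hη : 0 < η) :
    ∫ x, regInv F η x ^ q ∂gaussPi ι ≤
      1 + Real.exp 1 * (2 ^ q * B * ∑' i : ℕ, 1 / ((i : ℝ) + 1) ^ 2) := by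
  have summable : Summable fun i : ℕ => 1 / ((i : ℝ) + 1) ^ 2 := by
    exact_mod_cast (summable_nat_add_iff 1).mpr (Real.summable_one_div_nat_pow.mpr one_lt_two)
  have int : ∀ i ∈ Finset.range ⌊η⁻¹⌋₊, Integrable (fun x =>
      (2 * ((i : ℝ) + 1)) ^ q * Real.exp (-((i + 1) * sqField F x))) (gaussPi ι) := fun i _ =>
    (integrable_exp_neg_mul_sqField F (by positivity)).const_mul _
  have term_le : ∀ i : ℕ,
      ∫ x, (2 * ((i : ℝ) + 1)) ^ q * Real.exp (-((i + 1) * sqField F x)) ∂gaussPi ι ≤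
        2 ^ q * B * (1 / ((i : ℝ) + 1) ^ 2) := fun i => by
    rw [integral_const_mul]
    calc _ ≤ (2 * ((i : ℝ) + 1)) ^ q * (B / ((i : ℝ) + 1) ^ (q + 2)) := by
          gcongr
          exact laplace _ (by positivity)
      _ = 2 ^ q * B * (1 / ((i : ℝ) + 1) ^ 2) := by
          rw [mul_pow, pow_add]
          field_simp
  calc ∫ x, regInv F η x ^ q ∂gaussPi ι
      ≤ ∫ x, (1 + Real.exp 1 * ∑ i ∈ Finset.range ⌊η⁻¹⌋₊,
          (2 * (i + 1)) ^ q * Real.exp (-((i + 1) * sqField F x))) ∂gaussPi ι :=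
        integral_mono (integrable_regInv_pow F hη q)
          ((integrable_const 1).add ((integrable_finsetSum _ int).const_mul _)) fun x =>
            pow_le_one_add_exp_mul_sum (regInv_pos F hη x).le (regInv_le F hη x)
              (sqField_nonneg F x) ((mul_comm _ _).trans_le (sqField_mul_regInv_le_one F hη x)) q
    _ = 1 + Real.exp 1 * ∑ i ∈ Finset.range ⌊η⁻¹⌋₊,
          ∫ x, (2 * ((i : ℝ) + 1)) ^ q * Real.exp (-((i + 1) * sqField F x)) ∂gaussPi ι := by
        rw [integral_add (integrable_const 1) ((integrable_finsetSum _ int).const_mul _),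
          integral_const_mul, integral_finsetSum _ int, integral_const, probReal_univ, one_smul]
    _ ≤ 1 + Real.exp 1 * (2 ^ q * B * ∑' i : ℕ, 1 / ((i : ℝ) + 1) ^ 2) := by
        gcongr
        refine (Finset.sum_le_sum fun i _ => term_le i).trans ?_
        rw [← Finset.mul_sum]
        gcongr
        exact summable.sum_le_tsum _ fun _ _ => by positivity

lemma integral_exp_neg_mul_sqField_le_of_decay (F : MvPolynomial ι ℝ) {r : ℕ} (hr : 0 < r)
    {A : Set (Fin (4 * r) → ι → ℝ)} (hAm : MeasurableSet A)
    (hA : 3 / 4 ≤ (gaussVectors (Fin (4 * r)) ι).real A) {K : ℝ} (hK : 0 ≤ K)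
    (decay : ∀ N ∈ A, ∀ u : Fin (4 * r) → ℝ, ∑ j, u j ^ 2 = 1 → ∀ t : ℝ,
      |t| ^ (4 * r) * ‖∫ x, phase (dirDeriv (∑ j, u j • N j) F) t x ∂gaussPi ι‖ ≤ K)
    {s : ℝ} (hs : 0 < s) :
    ∫ x, Real.exp (-(s * sqField F x)) ∂gaussPi ι ≤
      2 * (1 + K) * (4 * r : ℕ) ^ r / s ^ r := by
  have card_pos : (0 : ℝ) < (4 * r : ℕ) := by positivity
  set σ := √√(s / (4 * r : ℕ))
  have hσ : 0 < σ := Real.sqrt_pos.mpr (Real.sqrt_pos.mpr (div_pos hs card_pos))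
  have sq_sq : (σ ^ 2) ^ 2 = s / (4 * r : ℕ) := by
    rw [Real.sq_sqrt (Real.sqrt_nonneg _), Real.sq_sqrt (div_pos hs card_pos).le]
  have inv_pow_eq : σ⁻¹ ^ (4 * r) = (4 * r : ℕ) ^ r / s ^ r := by
    rw [pow_mul, inv_pow, show σ ^ 4 = (σ ^ 2) ^ 2 by ring, sq_sq, inv_div, div_pow]
  have onA : ∀ N ∈ A, ∫ x, Real.exp (-(∑ j, (σ ^ 2 * eval x (dirDeriv (N j) F)) ^ 2) / 2)
      ∂gaussPi ι ≤ σ⁻¹ ^ (4 * r) + K * σ⁻¹ ^ (4 * r) := fun N hN => by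
    have measurable : Measurable fun (x : ι → ℝ) j => eval x (dirDeriv (N j) F) :=
      measurable_pi_lambda _ fun j => (MvPolynomial.continuous_eval _).measurable
    have main := integral_exp_neg_sum_sq_le (μ := gaussPi ι) measurable hK
      (fun u hu t => by
        have := decay N hN u hu t
        simpa only [phase, dirDeriv_sum_smul, map_sum, map_mul, eval_C] using this) hσ
    rwa [Fintype.card_fin] at main
  have average := integral_exp_neg_mul_sqField_le F (σ ^ 2) hAm hA (by positivity) onA
  rw [Fintype.card_fin, sq_sq, div_mul_cancel₀ s card_pos.ne', inv_pow_eq] at average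
  exact average.trans_eq (by ring)

/-- The statement proved by induction on the chaos degree `d`: if the carré du champ of an
eigenvector of degree `d` is close to `c` in `L²`, then its negative moments are bounded. They are
regularised by `η` so that they are finite from the outset; all bounds are uniform in `η` and in
the dimension. -/
def NegativeMomentsBounded (d : ℕ) : Prop :=
  ∀ c : ℝ, 0 < c → ∀ q : ℕ, ∃ δ : ℝ, 0 < δ ∧ ∃ M : ℝ,
    ∀ (ι : Type) [Fintype ι] (F : MvPolynomial ι ℝ), IsOUEigen d F →
      𝐄 ((Γ[F, F] - C c) ^ 2) ≤ δ → ∀ η : ℝ, 0 < η → ∫ x, regInv F η x ^ q ∂gaussPi ι ≤ M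

lemma exists_carreDuChamp_self_eq_C {F : MvPolynomial ι ℝ} (hF : F.totalDegree ≤ 1) :
    ∃ b : ℝ, Γ[F, F] = C b := by
  have const : ∀ i, ∃ a : ℝ, pderiv i F = C a := fun i =>
    ⟨_, totalDegree_eq_zero_iff_eq_C.mp
      (Nat.le_zero.mp ((totalDegree_pderiv_le i F).trans (Nat.sub_le_sub_right hF 1)))⟩
  choose a ha using const
  exact ⟨∑ i, a i ^ 2, by simp only [carreDuChamp_apply, ha, ← map_mul, ← map_sum, pow_two]⟩

lemma negativeMomentsBounded_one : NegativeMomentsBounded 1 := by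
  intro c hc q
  refine ⟨c ^ 2 / 4, by positivity, (2 / c) ^ q, fun ι _ F hF hδ η hη => ?_⟩
  obtain ⟨b, hb⟩ := exists_carreDuChamp_self_eq_C hF.totalDegree_le
  have half_le : c / 2 ≤ b := by
    rw [hb, ← map_sub, ← map_pow, gaussExp_C] at hδ
    have close := abs_le_of_sq_le_sq' (a := b - c) (b := c / 2) (by linarith) (by positivity)
    linarith [close.1]
  have pointwise : ∀ x, regInv F η x ^ q ≤ (2 / c) ^ q := fun x => by
    refine pow_le_pow_left₀ (regInv_pos F hη x).le ?_ q
    rw [regInv, ← eval_carreDuChamp_self, hb, eval_C, ← inv_div]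
    exact inv_anti₀ (by positivity) (by linarith)
  exact (integral_mono (integrable_regInv_pow F hη q) (integrable_const _) pointwise).trans_eq
    (by simp)

lemma gaussExp_sq_le_of_gaussExp_sub_C_sq_le {k : ℕ} {G : MvPolynomial ι ℝ} (hG : IsOUEigen k G)
    (hk : 1 ≤ k) {c δ : ℝ} (hδ : 𝐄 ((Γ[G, G] - C c) ^ 2) ≤ δ) : 𝐄 (G ^ 2) ≤ c + 1 + δ := by
  have mean_le : 𝐄 Γ[G, G] ≤ c + 1 + δ := by
    rw [gaussExp_sub_C_sq] at hδ
    have variance_nonneg := gaussExp_sq_nonneg (Γ[G, G] - C (𝐄 Γ[G, G]))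
    rw [gaussExp_sub_C_sq] at variance_nonneg
    nlinarith [sq_nonneg (𝐄 Γ[G, G] - c - 1)]
  have one_le : (1 : ℝ) ≤ k := by exact_mod_cast hk
  calc 𝐄 (G ^ 2) ≤ k * 𝐄 (G ^ 2) := le_mul_of_one_le_left (gaussExp_sq_nonneg G) one_le
    _ = 𝐄 Γ[G, G] := hG.gaussExp_carreDuChamp_self.symm
    _ ≤ c + 1 + δ := mean_le

lemma three_quarters_le_measureReal_setOf_le {Ω : Type*} [MeasurableSpace Ω] {μ : Measure Ω}
    [IsProbabilityMeasure μ] {f : Ω → ℝ} (hf : Integrable f μ) (hf0 : ∀ ω, 0 ≤ f ω) {δ : ℝ}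
    (hδ : 0 < δ) (mean_le : ∫ ω, f ω ∂μ ≤ δ / 4) : 3 / 4 ≤ μ.real {ω | f ω ≤ δ} := by
  have markov := mul_meas_ge_le_integral_of_nonneg (ae_of_all _ hf0) hf δ
  have large_le : μ.real {ω | δ ≤ f ω} ≤ 1 / 4 := by nlinarith
  have cover := measureReal_union_le (μ := μ) {ω | f ω ≤ δ} {ω | δ ≤ f ω}
  rw [show {ω | f ω ≤ δ} ∪ {ω | δ ≤ f ω} = Set.univ from
    Set.eq_univ_of_forall fun ω => le_total (f ω) δ, probReal_univ] at cover
  linarith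

lemma NegativeMomentsBounded.succ {k : ℕ} (hk : 1 ≤ k) (ih : NegativeMomentsBounded k) :
    NegativeMomentsBounded (k + 1) := by
  intro c hc q
  set p := 4 * (q + 2)
  obtain ⟨δ, hδ, M, hM⟩ := ih (k * c) (by positivity) (4 * p)
  obtain ⟨K, hK⟩ := exists_pow_mul_norm_integral_phase_le k (k * c + 1 + δ) M p
  set B := (p : ℝ) ^ 2 * k ^ 2 with hB
  have B_pos : 0 < B := by positivity
  refine ⟨δ / (4 * B), by positivity, _, fun ι _ F hF hFδ η hη =>
    integral_regInv_pow_le_of_laplace F q (B := 2 * (1 + |K|) * p ^ (q + 2)) (by positivity)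
      (fun s hs => ?_) hη⟩
  set A : Set (Fin p → ι → ℝ) := {N | totalDefect F (k * c) N ≤ δ}
  have measA : MeasurableSet A :=
    measurableSet_le (continuous_totalDefect F _).measurable measurable_const
  have likely : 3 / 4 ≤ (gaussVectors (Fin p) ι).real A := by
    refine three_quarters_le_measureReal_setOf_le (integrable_totalDefect F _)
      (totalDefect_nonneg F _) hδ ((hF.integral_totalDefect_le c).trans ?_)
    rw [Fintype.card_fin, ← mul_assoc, ← hB]
    calc B * 𝐄 ((Γ[F, F] - C c) ^ 2) ≤ B * (δ / (4 * B)) := by gcongr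
      _ = δ / 4 := by field_simp
  refine integral_exp_neg_mul_sqField_le_of_decay F (Nat.succ_pos _) measA likely (abs_nonneg K)
    (fun N hN u hu t => ?_) hs
  have eigen : IsOUEigen k (dirDeriv (∑ j, u j • N j) F) := hF.dirDeriv _
  have close := (gaussExp_carreDuChamp_dirDeriv_sum_smul_le F (k * c) N hu).trans hN
  exact (hK ι _ eigen (gaussExp_sq_le_of_gaussExp_sub_C_sq_le eigen hk close)
    (hM ι _ eigen close) t).trans (le_abs_self K)

theorem negativeMomentsBounded {d : ℕ} (hd : 1 ≤ d) : NegativeMomentsBounded d :=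
  Nat.le_induction negativeMomentsBounded_one (fun _ hk ih => ih.succ hk) d hd

end NegativeMoments

section HermiteChaos

lemma derivative_hermite_succ (n : ℕ) :
    Polynomial.derivative (Polynomial.hermite (n + 1)) =
      ((n : Polynomial ℤ) + 1) * Polynomial.hermite n := by
  induction n with
  | zero => simp
  | succ n ih =>
    rw [Polynomial.hermite_succ (n + 1), Polynomial.derivative_sub, Polynomial.derivative_mul,
      Polynomial.derivative_X, one_mul, ih, Polynomial.derivative_mul, Polynomial.derivative_add,
      Polynomial.derivative_natCast, Polynomial.derivative_one, Polynomial.hermite_succ n]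
    push_cast
    ring

lemma derivative_derivative_hermite (n : ℕ) :
    Polynomial.derivative (Polynomial.derivative (Polynomial.hermite n)) =
      Polynomial.X * Polynomial.derivative (Polynomial.hermite n) -
        (n : Polynomial ℤ) * Polynomial.hermite n := by
  cases n with
  | zero => simp
  | succ n =>
    rw [derivative_hermite_succ, Polynomial.derivative_mul, Polynomial.derivative_add,
      Polynomial.derivative_natCast, Polynomial.derivative_one, Polynomial.hermite_succ]
    push_cast
    ring

lemma pderiv_aeval_X {σ R : Type*} [CommRing R] (i j : σ) (h : Polynomial ℤ) :
    pderiv j (Polynomial.aeval (X i : MvPolynomial σ R) h) =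
      Polynomial.aeval (X i : MvPolynomial σ R) (Polynomial.derivative h) * pderiv j (X i) :=
  ((pderiv j).restrictScalars ℤ).map_aeval h (X i)

lemma totalDegree_aeval_X_le {σ R : Type*} [CommRing R] [Nontrivial R] (i : σ)
    (h : Polynomial ℤ) :
    (Polynomial.aeval (X i : MvPolynomial σ R) h).totalDegree ≤ h.natDegree := by
  rw [Polynomial.aeval_eq_sum_range]
  refine totalDegree_finsetSum_le fun n hn => (totalDegree_smul_le _ _).trans ?_
  rw [totalDegree_X_pow]
  exact Nat.lt_succ_iff.mp (Finset.mem_range.mp hn)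

variable {ι : Type} [Fintype ι]

lemma ouOp_aeval_X_hermite (i : ι) (n : ℕ) :
    ouOp (Polynomial.aeval (X i) (Polynomial.hermite n)) =
      C (-(n : ℝ)) * Polynomial.aeval (X i) (Polynomial.hermite n) := by
  rw [ouOp_apply, Finset.sum_eq_single i]
  · rw [pderiv_aeval_X, pderiv_X_self, mul_one, pderiv_aeval_X, pderiv_X_self, mul_one,
      derivative_derivative_hermite]
    simp only [map_sub, map_mul, Polynomial.aeval_X, map_natCast, map_neg]
    ring
  · intro j _ hj
    rw [pderiv_aeval_X, pderiv_X_of_ne hj.symm, mul_zero, map_zero, mul_zero, sub_zero]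
  · simp

lemma ouOp_prod {f : ι → MvPolynomial ι ℝ} (separate : ∀ i j, j ≠ i → pderiv j (f i) = 0)
    {a : ι → ℝ} (eigen : ∀ i, ouOp (f i) = C (a i) * f i) (s : Finset ι) :
    ouOp (∏ i ∈ s, f i) = C (∑ i ∈ s, a i) * ∏ i ∈ s, f i := by
  classical
  induction s using Finset.induction_on with
  | empty => simp [ouOp_apply]
  | insert i s hi ih =>
    have pderiv_prod : pderiv i (∏ j ∈ s, f j) = 0 :=
      Finset.prod_induction _ (fun P => pderiv i P = 0)
        (fun P Q hP hQ => by rw [Derivation.leibniz, hP, hQ, smul_zero, smul_zero, add_zero])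
        (Derivation.map_one_eq_zero _) fun j hj => separate j i (ne_of_mem_of_not_mem hj hi).symm
    have orthogonal : Γ[f i, ∏ j ∈ s, f j] = 0 := by
      rw [carreDuChamp_apply]
      refine Finset.sum_eq_zero fun j _ => ?_
      obtain rfl | hj := eq_or_ne j i
      · rw [pderiv_prod, mul_zero]
      · rw [separate i j hj, zero_mul]
    rw [Finset.prod_insert hi, Finset.sum_insert hi, ouOp_mul, orthogonal, ih, eigen, map_add]
    ring

lemma isOUEigen_hermiteProd {K : ℕ} (k : Fin K → ℕ) : IsOUEigen (∑ i, k i) (hermiteProd k) where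
  totalDegree_le := (totalDegree_finsetProd _ _).trans <| Finset.sum_le_sum fun i _ =>
    (totalDegree_aeval_X_le _ _).trans_eq Polynomial.natDegree_hermite
  ouOp_eq := by
    have separate : ∀ i j, j ≠ i →
        pderiv j (Polynomial.aeval (X i : MvPolynomial (Fin K) ℝ) (Polynomial.hermite (k i))) = 0 :=
      fun i j hj => by rw [pderiv_aeval_X, pderiv_X_of_ne hj.symm, mul_zero]
    rw [hermiteProd, ouOp_prod separate fun i => ouOp_aeval_X_hermite i (k i),
      Finset.sum_neg_distrib, Nat.cast_sum]

lemma isOUEigen_of_mem_chaos {K m : ℕ} {P : MvPolynomial (Fin K) ℝ} (hP : P ∈ chaos K m) :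
    IsOUEigen m P := by
  induction hP using Submodule.span_induction with
  | mem P hP =>
    obtain ⟨k, rfl, rfl⟩ := hP
    exact isOUEigen_hermiteProd k
  | zero => exact ⟨by simp, by simp⟩
  | add P Q _ _ hP hQ =>
    exact ⟨(totalDegree_add _ _).trans (max_le hP.totalDegree_le hQ.totalDegree_le),
      by rw [map_add, hP.ouOp_eq, hQ.ouOp_eq, mul_add]⟩
  | smul a P _ hP =>
    exact ⟨(totalDegree_smul_le _ _).trans hP.totalDegree_le,
      by rw [map_smul, hP.ouOp_eq, mul_smul_comm]⟩

end HermiteChaos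

section ConvergenceOfMoments

lemma integral_pow_add_two_gaussianReal (n : ℕ) :
    ∫ y, y ^ (n + 2) ∂gaussianReal 0 1 = (n + 1) * ∫ y, y ^ n ∂gaussianReal 0 1 := by
  have mul_pow : ∀ y : ℝ, (y - 0) • y ^ (n + 1) = y ^ (n + 2) := fun y => by
    rw [sub_zero, smul_eq_mul, ← pow_succ']
  have stein := integral_sub_smul_gaussianReal (μ := 0) (v := 1)
    (f' := fun y => (n + 1 : ℝ) * y ^ n)
    (fun y => by simpa using hasDerivAt_pow (n + 1) y) (integrable_pow_gaussianReal _)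
    ((integrable_pow_gaussianReal n).const_mul _)
    (by simpa only [mul_pow] using integrable_pow_gaussianReal (n + 2))
  simpa only [mul_pow, integral_const_mul, NNReal.coe_one, one_smul] using stein

lemma integral_sq_gaussianReal : ∫ y, y ^ 2 ∂gaussianReal 0 1 = 1 := by
  simpa using integral_pow_add_two_gaussianReal 0

lemma integral_pow_four_gaussianReal : ∫ y, y ^ 4 ∂gaussianReal 0 1 = 3 := by
  rw [integral_pow_add_two_gaussianReal 2, integral_sq_gaussianReal]
  norm_num

variable {E : Type} [MeasurableSpace E]

section Truncation

variable {μ : Measure E} [IsFiniteMeasure μ] {φ : E → ℝ}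

lemma integrable_min_const (hφ : Integrable φ μ) (A : ℝ) :
    Integrable (fun y => min (φ y) A) μ :=
  hφ.inf (integrable_const A)

lemma abs_integral_sub_integral_min_le (hφ : MemLp φ 2 μ) {A : ℝ} (hA : 0 < A) :
    |∫ y, φ y ∂μ - ∫ y, min (φ y) A ∂μ| ≤ (∫ y, φ y ^ 2 ∂μ) / A := by
  have int := hφ.integrable one_le_two
  have pointwise : ∀ y, ‖φ y - min (φ y) A‖ ≤ φ y ^ 2 / A := fun y => by
    rw [Real.norm_of_nonneg (sub_nonneg.mpr (min_le_left _ _)), le_div_iff₀ hA]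
    rcases le_total (φ y) A with h | h
    · rw [min_eq_left h, sub_self, zero_mul]
      exact sq_nonneg _
    · rw [min_eq_right h]
      nlinarith
  rw [← integral_sub int (integrable_min_const int A), ← integral_div]
  exact norm_integral_le_of_norm_le (hφ.integrable_sq.div_const A) (ae_of_all _ pointwise)

/- Where `φ > A`, the inequality `(φ - 2Hv)² ≥ 0` bounds `φ` by `φ² / (4Hv) + Hv`, and the last
term is paid for by the truncation. -/
lemma integral_le_of_integral_min_le [IsProbabilityMeasure μ] (hφ : MemLp φ 2 μ)
    (hφ0 : ∀ y, 0 ≤ φ y) {H : ℝ} (hH : 0 < H)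
    (reverseHolder : ∫ y, φ y ^ 2 ∂μ ≤ H * (∫ y, φ y ∂μ) ^ 2) {A : ℝ} (hA : 0 < A)
    (truncated : ∫ y, min (φ y) A ∂μ ≤ A / (4 * H)) : ∫ y, φ y ∂μ ≤ 2 * A := by
  have int := hφ.integrable one_le_two
  set v := ∫ y, φ y ∂μ
  obtain zero | (pos : 0 < v) := (integral_nonneg hφ0 : 0 ≤ v).eq_or_lt
  · linarith
  have pointwise : ∀ y, φ y ≤ A + (φ y ^ 2 / (4 * H * v) + H * v / A * min (φ y) A) := fun y => by
    rcases le_total (φ y) A with h | h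
    · rw [min_eq_left h]
      have := hφ0 y
      have : 0 ≤ φ y ^ 2 / (4 * H * v) + H * v / A * φ y := by positivity
      linarith
    · rw [min_eq_right h, div_mul_cancel₀ _ hA.ne']
      have square :
          φ y ^ 2 / (4 * H * v) + H * v - φ y = (φ y - 2 * (H * v)) ^ 2 / (4 * H * v) := by
        field_simp
        ring
      have : 0 ≤ (φ y - 2 * (H * v)) ^ 2 / (4 * H * v) := by positivity
      linarith
  have intSq := hφ.integrable_sq.div_const (4 * H * v)
  have intMin := (integrable_min_const int A).const_mul (H * v / A)
  have integrated := integral_mono int ((integrable_const A).add (intSq.add intMin)) pointwise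
  rw [integral_add' (integrable_const A) (intSq.add intMin), integral_add' intSq intMin,
    integral_const, probReal_univ, one_smul, integral_div, integral_const_mul] at integrated
  have sq_le : (∫ y, φ y ^ 2 ∂μ) / (4 * H * v) ≤ v / 4 := by
    rw [div_le_iff₀ (by positivity)]
    linarith
  have min_le : H * v / A * ∫ y, min (φ y) A ∂μ ≤ v / 4 := by
    calc _ ≤ H * v / A * (A / (4 * H)) := by gcongr
      _ = v / 4 := by field_simp
  linarith

end Truncation

variable [TopologicalSpace E] {μs : ℕ → Measure E} {μ : Measure E}
  {φ : E → ℝ}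

lemma TendstoInLaw.tendsto_integral_min (h : TendstoInLaw μs μ) (hφ : Continuous φ)
    (hφ0 : ∀ y, 0 ≤ φ y) {A : ℝ} (hA : 0 ≤ A) :
    Tendsto (fun n => ∫ y, min (φ y) A ∂μs n) atTop (𝓝 (∫ y, min (φ y) A ∂μ)) :=
  h (.ofNormedAddCommGroup (fun y => min (φ y) A) (by fun_prop) A fun y => by
    rw [Real.norm_of_nonneg (le_min (hφ0 y) hA)]
    exact min_le_right _ _)

variable [∀ n, IsProbabilityMeasure (μs n)] [IsProbabilityMeasure μ]

lemma TendstoInLaw.eventually_integral_le (h : TendstoInLaw μs μ) (hφ : Continuous φ)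
    (hφ0 : ∀ y, 0 ≤ φ y) (hφs : ∀ n, MemLp φ 2 (μs n)) (hφμ : Integrable φ μ) {H : ℝ} (hH : 0 < H)
    (reverseHolder : ∀ n, ∫ y, φ y ^ 2 ∂μs n ≤ H * (∫ y, φ y ∂μs n) ^ 2) :
    ∀ᶠ n in atTop, ∫ y, φ y ∂μs n ≤ 2 * (4 * H * (∫ y, φ y ∂μ + 1)) := by
  set A := 4 * H * (∫ y, φ y ∂μ + 1)
  have mean_nonneg : 0 ≤ ∫ y, φ y ∂μ := integral_nonneg hφ0
  have A_pos : 0 < A := by positivity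
  have limit_lt : ∫ y, min (φ y) A ∂μ < A / (4 * H) := by
    rw [mul_div_cancel_left₀ _ (by positivity)]
    exact (integral_mono (integrable_min_const hφμ A) hφμ fun y => min_le_left _ _).trans_lt
      (lt_add_one _)
  filter_upwards [(h.tendsto_integral_min hφ hφ0 A_pos.le).eventually_lt_const limit_lt]
    with n truncated
  exact integral_le_of_integral_min_le (hφs n) hφ0 hH (reverseHolder n) A_pos truncated.le

lemma TendstoInLaw.tendsto_integral_of_eventually_le (h : TendstoInLaw μs μ) (hφ : Continuous φ)
    (hφ0 : ∀ y, 0 ≤ φ y) (hφs : ∀ n, MemLp φ 2 (μs n)) (hφμ : MemLp φ 2 μ) {B : ℝ}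
    (hB : ∀ᶠ n in atTop, ∫ y, φ y ^ 2 ∂μs n ≤ B) :
    Tendsto (fun n => ∫ y, φ y ∂μs n) atTop (𝓝 (∫ y, φ y ∂μ)) := by
  rw [Metric.tendsto_nhds]
  intro ε hε
  set B' := max B (∫ y, φ y ^ 2 ∂μ) + 1
  have B'_pos : 0 < B' :=
    add_pos_of_nonneg_of_pos (le_max_of_le_right (integral_nonneg fun _ => sq_nonneg _)) one_pos
  set A := 3 * B' / ε
  have A_pos : 0 < A := by positivity
  have error_le : ∀ (ν : Measure E) [IsProbabilityMeasure ν], MemLp φ 2 ν →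
      ∫ y, φ y ^ 2 ∂ν ≤ B' → |∫ y, φ y ∂ν - ∫ y, min (φ y) A ∂ν| ≤ ε / 3 := fun ν _ hν le =>
    (abs_integral_sub_integral_min_le hν A_pos).trans <| by
      rw [div_le_iff₀ A_pos]
      exact le.trans_eq (by simp only [A]; field_simp)
  have truncated := Metric.tendsto_nhds.mp (h.tendsto_integral_min hφ hφ0 A_pos.le) (ε / 3)
    (by positivity)
  filter_upwards [truncated, hB] with n close le
  have error_n := error_le (μs n) (hφs n)
    (le.trans ((le_max_left _ _).trans (lt_add_one _).le))
  have error := error_le μ hφμ ((le_max_right _ _).trans (lt_add_one _).le)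
  rw [Real.dist_eq, abs_lt] at close ⊢
  rw [abs_le] at error_n error
  constructor <;> linarith

lemma TendstoInLaw.tendsto_integral (h : TendstoInLaw μs μ) (hφ : Continuous φ)
    (hφ0 : ∀ y, 0 ≤ φ y) (hφs : ∀ n, MemLp φ 2 (μs n)) (hφμ : MemLp φ 2 μ) {H : ℝ} (hH : 0 < H)
    (reverseHolder : ∀ n, ∫ y, φ y ^ 2 ∂μs n ≤ H * (∫ y, φ y ∂μs n) ^ 2) :
    Tendsto (fun n => ∫ y, φ y ∂μs n) atTop (𝓝 (∫ y, φ y ∂μ)) := by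
  refine h.tendsto_integral_of_eventually_le hφ hφ0 hφs hφμ 
    (B := H * (2 * (4 * H * (∫ y, φ y ∂μ + 1))) ^ 2) ?_
  filter_upwards [h.eventually_integral_le hφ hφ0 hφs (hφμ.integrable one_le_two) hH
    reverseHolder] with n bounded
  refine (reverseHolder n).trans (mul_le_mul_of_nonneg_left ?_ hH.le)
  exact pow_le_pow_left₀ (integral_nonneg hφ0) bounded 2

end ConvergenceOfMoments

section CentralLimit

variable {ι : ℕ → Type} [∀ n, Fintype (ι n)] {P : ∀ n, MvPolynomial (ι n) ℝ}

lemma tendsto_gaussExp_pow_of_tendstoInLaw {D : ℕ} (hP : ∀ n, (P n).totalDegree ≤ D)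
    (hlaw : TendstoInLaw (fun n => (gaussPi (ι n)).map fun x => eval x (P n)) (gaussianReal 0 1))
    (j : ℕ) : Tendsto (fun n => 𝐄 (P n ^ (2 * j))) atTop
      (𝓝 (∫ y, y ^ (2 * j) ∂gaussianReal 0 1)) := by
  have meas : ∀ n, AEMeasurable (fun x => eval x (P n)) (gaussPi (ι n)) := fun n =>
    (MvPolynomial.continuous_eval _).measurable.aemeasurable
  have prob := fun n => Measure.isProbabilityMeasure_map (meas n)
  have moment : ∀ n k, ∫ y, y ^ k ∂(gaussPi (ι n)).map (fun x => eval x (P n)) =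
      𝐄 (P n ^ k) := fun n k => by
    rw [integral_map (meas n) (by fun_prop), gaussExp_apply]
    simp only [map_pow]
  have integrable_pow : ∀ n k,
      Integrable (fun y => y ^ k) ((gaussPi (ι n)).map fun x => eval x (P n)) := fun n k => by
    rw [integrable_map_measure (by fun_prop) (meas n)]
    simpa only [Function.comp_def, map_pow] using integrable_eval_gaussPi (P n ^ k)
  have sq_pow : ∀ y : ℝ, (y ^ (2 * j)) ^ 2 = y ^ (j * 4) := fun y => by
    rw [← pow_mul]
    ring_nf
  have limit := hlaw.tendsto_integral (φ := fun y => y ^ (2 * j)) (by fun_prop)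
    (fun y => (even_two_mul j).pow_nonneg y)
    (fun n => (memLp_two_iff_integrable_sq (by fun_prop)).mpr
      (by simpa only [sq_pow] using integrable_pow n (j * 4)))
    ((memLp_two_iff_integrable_sq (by fun_prop)).mpr
      (by simpa only [sq_pow] using integrable_pow_gaussianReal (j * 4)))
    (H := hyperConst (j * D) + 1) (by linarith [hyperConst_nonneg (j * D)]) fun n => by
      simp only [sq_pow, moment]
      have degree : (P n ^ j).totalDegree ≤ j * D :=
        (totalDegree_pow _ _).trans (Nat.mul_le_mul_left j (hP n))
      have hyper := gaussExp_pow_four_le degree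
      rw [← pow_mul, ← pow_mul, mul_comm j 2] at hyper
      exact hyper.trans (mul_le_mul_of_nonneg_right (lt_add_one _).le (sq_nonneg _))
  simpa only [moment] using limit

lemma lintegral_inv_sqField_pow_le {ι : Type} [Fintype ι] (F : MvPolynomial ι ℝ) {q : ℕ} {M : ℝ}
    (bound : ∀ η : ℝ, 0 < η → ∫ x, regInv F η x ^ q ∂gaussPi ι ≤ M) :
    ∫⁻ x, (ENNReal.ofReal (sqField F x) ^ q)⁻¹ ∂gaussPi ι ≤ ENNReal.ofReal M := by
  set η : ℕ → ℝ := fun j => 1 / ((j : ℝ) + 1)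
  have η_pos : ∀ j, 0 < η j := fun _ => Nat.one_div_pos_of_nat
  have η_tendsto : Tendsto η atTop (𝓝 0) := tendsto_one_div_add_atTop_nhds_zero_nat
  have pointwise : ∀ x, Tendsto (fun j => ENNReal.ofReal (regInv F (η j) x ^ q)) atTop
      (𝓝 (ENNReal.ofReal (sqField F x) ^ q)⁻¹) := fun x => by
    have ofReal_regInv : ∀ j, ENNReal.ofReal (regInv F (η j) x ^ q) =
        (ENNReal.ofReal (sqField F x + η j) ^ q)⁻¹ := fun j => by
      rw [ENNReal.ofReal_pow (regInv_pos F (η_pos j) x).le, regInv,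
        ENNReal.ofReal_inv_of_pos (sqField_add_pos F (η_pos j) x), ENNReal.inv_pow]
    have shrink : Tendsto (fun j => sqField F x + η j) atTop (𝓝 (sqField F x)) := by
      simpa only [add_zero] using η_tendsto.const_add (sqField F x)
    simp only [ofReal_regInv]
    exact ((ENNReal.continuous_pow q).tendsto _ |>.comp (ENNReal.tendsto_ofReal shrink)).inv
  have lintegral_le : ∀ j,
      ∫⁻ x, ENNReal.ofReal (regInv F (η j) x ^ q) ∂gaussPi ι ≤ ENNReal.ofReal M := fun j => by
    rw [← ofReal_integral_eq_lintegral_ofReal (integrable_regInv_pow F (η_pos j) q)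
      (ae_of_all _ fun x => pow_nonneg (regInv_pos F (η_pos j) x).le q)]
    exact ENNReal.ofReal_le_ofReal (bound _ (η_pos j))
  calc _ = ∫⁻ x, liminf (fun j => ENNReal.ofReal (regInv F (η j) x ^ q)) atTop ∂gaussPi ι :=
        lintegral_congr fun x => (pointwise x).liminf_eq.symm
    _ ≤ liminf (fun j => ∫⁻ x, ENNReal.ofReal (regInv F (η j) x ^ q) ∂gaussPi ι) atTop :=
        lintegral_liminf_le fun j =>
          ((continuous_regInv F (η_pos j)).pow q).measurable.ennreal_ofReal
    _ ≤ liminf (fun _ : ℕ => ENNReal.ofReal M) atTop := liminf_le_liminf (.of_forall lintegral_le)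
    _ = _ := liminf_const _

lemma one_le_of_tendsto_gaussExp {m : ℕ} (hP : ∀ n, (P n).totalDegree ≤ m)
    (h2 : Tendsto (fun n => 𝐄 (P n ^ 2)) atTop (𝓝 1))
    (h4 : Tendsto (fun n => 𝐄 (P n ^ 4)) atTop (𝓝 3)) : 1 ≤ m := by
  by_contra! lt_one
  have const : ∀ n, 𝐄 (P n ^ 4) = 𝐄 (P n ^ 2) ^ 2 := fun n => by
    rw [totalDegree_eq_zero_iff_eq_C.mp (Nat.le_zero.mp ((hP n).trans (Nat.le_of_lt_succ lt_one))),
      ← C_pow, ← C_pow, gaussExp_C, gaussExp_C, ← pow_mul]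
  simp only [const] at h4
  have := tendsto_nhds_unique h4 (h2.pow 2)
  norm_num at this

lemma IsOUEigen.tendsto_gaussExp_carreDuChamp_self_sub_C_sq {k : ℕ} (hP : ∀ n, IsOUEigen k (P n))
    (h2 : Tendsto (fun n => 𝐄 (P n ^ 2)) atTop (𝓝 1))
    (h4 : Tendsto (fun n => 𝐄 (P n ^ 4)) atTop (𝓝 3)) :
    Tendsto (fun n => 𝐄 ((Γ[P n, P n] - C (k : ℝ)) ^ 2)) atTop (𝓝 0) := by
  have upper : Tendsto (fun n => (k : ℝ) ^ 2 * (1 / 3 * 𝐄 (P n ^ 4) - 2 * 1 * 𝐄 (P n ^ 2) + 1 ^ 2))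
      atTop (𝓝 0) := by
    convert (((h4.const_mul _).sub (h2.const_mul _)).add_const _).const_mul _ using 2
    norm_num
  refine squeeze_zero (fun n => gaussExp_sq_nonneg _) (fun n => ?_) upper
  simpa only [mul_one] using (hP n).gaussExp_carreDuChamp_self_sub_C_sq_le 1

end CentralLimit

/-- For a sequence `(F_n)` in the finitely generated Wiener chaos of degree `m`
converging in law to `N(0,1)`, all negative moments of the carré du champ are asymptotically
bounded. -/
theorem negative_moments_of_chaos_clt (m : ℕ) (K : ℕ → ℕ)
    (P : (n : ℕ) → MvPolynomial (Fin (K n)) ℝ)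
    (hchaos : ∀ n, P n ∈ chaos (K n) m)
    (hlaw : TendstoInLaw
      (fun n => Measure.map (fun x => eval x (P n)) (gaussPi (Fin (K n))))
      (gaussianReal 0 1)) :
    ∀ q : ℕ,
      Filter.limsup
        (fun n => ∫⁻ x, (ENNReal.ofReal (sqField (P n) x) ^ q)⁻¹ ∂gaussPi (Fin (K n)))
        atTop < ⊤ := by
  intro q
  have eigen : ∀ n, IsOUEigen m (P n) := fun n => isOUEigen_of_mem_chaos (hchaos n)
  have degree : ∀ n, (P n).totalDegree ≤ m := fun n => (eigen n).totalDegree_le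
  have second : Tendsto (fun n => 𝐄 (P n ^ 2)) atTop (𝓝 1) :=
    integral_sq_gaussianReal ▸ tendsto_gaussExp_pow_of_tendstoInLaw degree hlaw 1
  have fourth : Tendsto (fun n => 𝐄 (P n ^ 4)) atTop (𝓝 3) :=
    integral_pow_four_gaussianReal ▸ tendsto_gaussExp_pow_of_tendstoInLaw degree hlaw 2
  have one_le : 1 ≤ m := one_le_of_tendsto_gaussExp degree second fourth
  obtain ⟨δ, hδ, M, hM⟩ := negativeMomentsBounded one_le m (by positivity) q
  have bounded : ∀ᶠ n in atTop,
      ∫⁻ x, (ENNReal.ofReal (sqField (P n) x) ^ q)⁻¹ ∂gaussPi (Fin (K n)) ≤ ENNReal.ofReal M := by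
    filter_upwards [(IsOUEigen.tendsto_gaussExp_carreDuChamp_self_sub_C_sq eigen second
      fourth).eventually_lt_const hδ] with n close
    exact lintegral_inv_sqField_pow_le (P n) (hM _ (P n) (eigen n) close.le)
  exact (limsup_le_of_le (h := bounded)).trans_lt ENNReal.ofReal_lt_top
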